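/- arXiv:1009.1271 — 2 statements merged into one kernel-verified Lean document; each statement's English description precedes it below -/
import Mathlib

section
/- Let S be a Noetherian ℤ-graded ring and M a finitely generated graded S-module. Then for every i: (i) end(H^i_{S_+}(M)) ∈ ℤ ∪ {−∞}, i.e. H^i_{S_+}(M) vanishes in all sufficiently large degrees; and (ii) for every μ ∈ ℤ the graded piece H^i_{S_+}(M)_μ is a finitely generated S_0-module. -/
noncomputable section CechCore

variable (A : Type) [CommRing A] {n : ℕ} (x : Fin n → A)
  (M : Type) [AddCommGroup M] [Module A M]

/-- The localization of `M` at the powers of `∏ i ∈ S, x i`. -/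
abbrev cechL (S : Finset (Fin n)) : Type :=
  LocalizedModule (Submonoid.powers (∏ i ∈ S, x i)) M

/-- The `p`-th term of the (stable Koszul/Čech) complex of `M` with respect to `x`. -/
abbrev cechC (p : ℕ) : Type := ∀ S : {S : Finset (Fin n) // S.card = p}, cechL A x M S.1

/-- The localization map between Čech localizations, for `S ⊆ T`. -/
def cechMap (S T : Finset (Fin n)) (h : S ⊆ T) : cechL A x M S →ₗ[A] cechL A x M T :=
  LocalizedModule.lift _ (LocalizedModule.mkLinearMap (Submonoid.powers (∏ i ∈ T, x i)) M)
    (by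
      rintro ⟨s, k, rfl⟩
      simp only [map_pow]
      refine IsUnit.pow k ?_
      have hu : IsUnit ((algebraMap A (Module.End A (cechL A x M T))) (∏ i ∈ T, x i)) :=
        IsLocalizedModule.map_units (LocalizedModule.mkLinearMap _ M)
          ⟨∏ i ∈ T, x i, Submonoid.mem_powers _⟩
      have h2 : (∏ i ∈ T, x i) = (∏ i ∈ T \ S, x i) * ∏ i ∈ S, x i :=
        (Finset.prod_sdiff h).symm
      have hu' : IsUnit ((algebraMap A (Module.End A (cechL A x M T)))
          ((∏ i ∈ T \ S, x i) * ∏ i ∈ S, x i)) := by rw [← h2]; exact hu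
      rw [map_mul] at hu'
      exact (((Commute.all ((∏ i ∈ T \ S, x i)) (∏ i ∈ S, x i)).map
        (algebraMap A (Module.End A (cechL A x M T))).toMonoidHom).isUnit_mul_iff.mp hu').2)

/-- The Čech differential. -/
def cechD (p : ℕ) : cechC A x M p →ₗ[A] cechC A x M (p + 1) :=
  LinearMap.pi fun T =>
    ∑ j ∈ T.1.attach,
      ((-1 : A) ^ (T.1.filter (fun a => a < j.1)).card) •
        ((cechMap A x M (T.1.erase j.1) T.1 (Finset.erase_subset _ _)).comp
          (LinearMap.proj (⟨T.1.erase j.1, by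
            simp [Finset.card_erase_of_mem j.2, T.2]⟩ : {S : Finset (Fin n) // S.card = p})))

/-- `c` is a coboundary in the Čech complex. -/
def cechIsBoundary : (p : ℕ) → cechC A x M p → Prop
  | 0, c => c = 0
  | (q + 1), c => ∃ b : cechC A x M q, cechD A x M q b = c

/-- The degree-`μ` graded piece of a Čech localization, for a grading `ℳ` of `M`
over a grading of `A` in which `x i` has degree `w i`. -/
def cechGrade (ℳ : ℤ → AddSubgroup M) (w : Fin n → ℤ) (μ : ℤ) (S : Finset (Fin n)) :
    AddSubgroup (cechL A x M S) :=
  AddSubgroup.closure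
    {c | ∃ (m : M) (k : ℕ), m ∈ ℳ (μ + k * (∑ i ∈ S, w i)) ∧
      c = LocalizedModule.mk m ⟨(∏ i ∈ S, x i) ^ k, Submonoid.pow_mem _ (Submonoid.mem_powers _) k⟩}

/-- `H^i_{(x)}(M)_μ ≠ 0`: there is a homogeneous degree-`μ` cocycle in the Čech complex
which is not a coboundary.  This is the nonvanishing of the degree-`μ` part of the `i`-th
local cohomology of the graded module `M` supported on the ideal generated by `x`. -/
def lcGradeNonzero (ℳ : ℤ → AddSubgroup M) (w : Fin n → ℤ) (i : ℕ) (μ : ℤ) : Prop :=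
  ∃ c : cechC A x M i, (∀ T, c T ∈ cechGrade A x M ℳ w μ T.1) ∧
    cechD A x M i c = 0 ∧ ¬ cechIsBoundary A x M i c

/-- `H^i_{(x)}(M) = 0` : every Čech cocycle is a coboundary. -/
def lcVanish (i : ℕ) : Prop :=
  ∀ c : cechC A x M i, cechD A x M i c = 0 → cechIsBoundary A x M i c

/-- The map from the previous term of the Čech complex (declared as the zero map in
homological degree `0`). -/
def cechDprev : (i : ℕ) → (cechC A x M (i - 1) →ₗ[A] cechC A x M i)
  | 0 => 0
  | (q + 1) => cechD A x M q

/-- The `i`-th local cohomology module of `M` supported on the ideal generated by `x`,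
defined as cocycles modulo (cocycles ∩ boundaries) of the Čech complex. -/
def lcMod (i : ℕ) : Type :=
  ↥(LinearMap.ker (cechD A x M i)) ⧸
    (Submodule.comap (LinearMap.ker (cechD A x M i)).subtype
      (LinearMap.range (cechDprev A x M i)))

instance (i : ℕ) : AddCommGroup (lcMod A x M i) := by unfold lcMod; infer_instance
instance (i : ℕ) : Module A (lcMod A x M i) := by unfold lcMod; infer_instance

/-- The ideal of elements of positive degree of a graded ring. -/
def irrelevantIdeal (𝒜 : ℤ → AddSubgroup A) : Ideal A :=
  Ideal.span {a : A | ∃ μ > 0, a ∈ 𝒜 μ}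

end CechCore


/-!
Cochains of all cohomological degrees are put into a single differential module, and the theorem
is proved for every subquotient `Q / P` of `M` by homogeneous submodules, by induction on the number
of variables that do not kill `Q / P`.

If `x j` does not kill `Q / P`, multiplication by `x j` on `H(Q / P)` factors through
`H((P + x j Q) / P)`. The kernels of the two factors are images of `H(K / P)`, where
`K = {q ∈ Q | x j q ∈ P}`, and of `H(Q / (P + x j Q))`; both subquotients are killed by `x j`, so
the induction hypothesis applies to them. In large degrees both vanish, so `x j` acts injectively on
`H(Q / P)`; but every class is killed by a power of `x j`, so `H(Q / P)` vanishes there as well.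
In lower degrees its pieces are Noetherian by descending induction, because `H(Q / P)_μ` is built
from `H(K / P)_μ`, a quotient of `H(Q / (P + x j Q))` and a submodule of `H(Q / P)_{μ + deg (x j)}`.

If all variables kill `Q / P`, only the augmentation term `Q / P` of its Čech complex survives. It
is a finitely generated module on which `S₊` acts as zero, so it vanishes in large degrees and its
pieces are Noetherian over `S₀`.
-/

section RelativeHomology

variable {R X : Type*} [Ring R] [AddCommGroup X] [Module R X]

theorem isNoetherian_of_ker_le_range {M₁ M₂ M₃ : Type*} [AddCommGroup M₁] [AddCommGroup M₂]
    [AddCommGroup M₃] [Module R M₁] [Module R M₂] [Module R M₃] [IsNoetherian R M₁]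
    [IsNoetherian R M₃] (f : M₁ →ₗ[R] M₂) (g : M₂ →ₗ[R] M₃)
    (h : LinearMap.ker g ≤ LinearMap.range f) : IsNoetherian R M₂ :=
  have : IsNoetherian R (LinearMap.ker g) := isNoetherian_of_le h
  isNoetherian_of_range_eq_ker (LinearMap.ker g).subtype g (Submodule.range_subtype _)

theorem injective_of_ker_le_range {M₁ M₂ M₃ : Type*} [AddCommGroup M₁] [AddCommGroup M₂]
    [AddCommGroup M₃] [Module R M₁] [Module R M₂] [Module R M₃] [Subsingleton M₁]
    (f : M₁ →ₗ[R] M₂) (g : M₂ →ₗ[R] M₃)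
    (h : LinearMap.ker g ≤ LinearMap.range f) : Function.Injective g :=
  LinearMap.ker_eq_bot.1 <| eq_bot_iff.2 <| h.trans (LinearMap.range_eq_bot.2
    (Subsingleton.elim f 0)).le

/-- The cocycles of the subquotient `Q / P` of a differential module `(X, d)`, as elements of `Q`;
the submodules `P` and `Q` need not be `d`-stable. -/
def relCycles (d : Module.End R X) (Q P : Submodule R X) : Submodule R X :=
  Q ⊓ P.comap d

/-- The elements of `X` that become boundaries in the subquotient `Q / P` of a differential
module `(X, d)`. -/
def relBoundaries (d : Module.End R X) (Q P : Submodule R X) : Submodule R X :=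
  P ⊔ Q.map d

/-- The homology of the subquotient `Q / P` of a differential module `(X, d)`. -/
abbrev RelHomology (d : Module.End R X) (Q P : Submodule R X) : Type _ :=
  relCycles d Q P ⧸ (relBoundaries d Q P).submoduleOf (relCycles d Q P)

variable {d : Module.End R X} {P Q P' Q' K N : Submodule R X}

theorem mem_relCycles {z : X} : z ∈ relCycles d Q P ↔ z ∈ Q ∧ d z ∈ P :=
  Iff.rfl

theorem mem_relBoundaries {z : X} :
    z ∈ relBoundaries d Q P ↔ ∃ p ∈ P, ∃ q ∈ Q, p + d q = z := by
  simp only [relBoundaries, Submodule.mem_sup, Submodule.mem_map, exists_exists_and_eq_and]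

theorem relCycles_mono (hQ : Q ≤ Q') (hP : P ≤ P') : relCycles d Q P ≤ relCycles d Q' P' :=
  inf_le_inf hQ (Submodule.comap_mono hP)

theorem relBoundaries_mono (hQ : Q ≤ Q') (hP : P ≤ P') :
    relBoundaries d Q P ≤ relBoundaries d Q' P' :=
  sup_le_sup hP (Submodule.map_mono hQ)

namespace RelHomology

/-- The class of a cocycle in the homology of a subquotient. -/
def mk (d : Module.End R X) (Q P : Submodule R X) : relCycles d Q P →ₗ[R] RelHomology d Q P :=
  Submodule.mkQ _

theorem mk_surjective : Function.Surjective (mk d Q P) :=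
  Submodule.mkQ_surjective _

theorem mk_eq_mk_iff {y z : relCycles d Q P} :
    mk d Q P y = mk d Q P z ↔ (y - z : X) ∈ relBoundaries d Q P :=
  Submodule.Quotient.eq _

theorem mk_eq_zero_iff {z : relCycles d Q P} :
    mk d Q P z = 0 ↔ (z : X) ∈ relBoundaries d Q P :=
  Submodule.Quotient.mk_eq_zero _

theorem subsingleton_iff : Subsingleton (RelHomology d Q P) ↔
    relCycles d Q P ≤ relBoundaries d Q P := by
  rw [Submodule.Quotient.subsingleton_iff, Submodule.submoduleOf_eq_top]

/-- The map on homology of subquotients induced by an endomorphism `f` of `X` that respects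
cocycles and boundaries. Taking `f = d` gives the connecting homomorphisms. -/
def map (f : Module.End R X) (hZ : relCycles d Q P ≤ (relCycles d Q' P').comap f)
    (hB : relBoundaries d Q P ≤ (relBoundaries d Q' P').comap f) :
    RelHomology d Q P →ₗ[R] RelHomology d Q' P' :=
  Submodule.mapQ _ _ (f.restrict hZ) fun _ hz => hB hz

/-- The map on homology induced by inclusions of submodules. -/
def inclusion (d : Module.End R X) (hQ : Q ≤ Q') (hP : P ≤ P') :
    RelHomology d Q P →ₗ[R] RelHomology d Q' P' :=
  map LinearMap.id (relCycles_mono hQ hP) (relBoundaries_mono hQ hP)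

/-- The connecting homomorphism of `0 → Q' / P → Q / P → Q / Q' → 0`. -/
def connecting (hd : d * d = 0) (Q Q' P : Submodule R X) :
    RelHomology d Q Q' →ₗ[R] RelHomology d Q' P :=
  have hdd : ∀ q, d (d q) = 0 := fun q => DFunLike.congr_fun hd q
  map d (fun z hz => ⟨hz.2, by simp [hdd]⟩) <|
    sup_le (fun q hq => Submodule.mem_sup_right (Submodule.mem_map_of_mem hq)) <| by
      rintro _ ⟨q, -, rfl⟩
      simp only [Submodule.mem_comap, hdd, Submodule.zero_mem]

/-- The map on homology induced by an endomorphism commuting with `d`. -/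
def mapOfCommute {f : Module.End R X} (hf : Commute f d) (hQ : Q ≤ Q'.comap f)
    (hP : P ≤ P'.comap f) : RelHomology d Q P →ₗ[R] RelHomology d Q' P' :=
  have hfd : ∀ q, f (d q) = d (f q) := fun q => DFunLike.congr_fun hf.eq q
  map f (fun z hz => ⟨hQ hz.1, show d (f z) ∈ P' from hfd z ▸ hP hz.2⟩) <|
    sup_le (fun p hp => Submodule.mem_sup_left (hP hp)) <| by
      rintro _ ⟨q, hq, rfl⟩
      exact Submodule.mem_sup_right ⟨f q, hQ hq, (hfd q).symm⟩

theorem ker_inclusion_le_range_connecting (hd : d * d = 0) (hP : P ≤ Q') (hQ : Q' ≤ Q) :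
    LinearMap.ker (inclusion d hQ (le_refl P)) ≤ LinearMap.range (connecting hd Q Q' P) := by
  intro ξ hξ
  obtain ⟨z, rfl⟩ := mk_surjective ξ
  obtain ⟨p, hp, q, hq, hpq⟩ := mem_relBoundaries.1 (mk_eq_zero_iff.1 hξ)
  replace hpq : z = p + d q := hpq.symm
  have hdq : d q ∈ Q' := eq_sub_of_add_eq' hpq.symm ▸ sub_mem z.2.1 (hP hp)
  refine ⟨mk d Q Q' ⟨q, hq, hdq⟩, mk_eq_mk_iff.2 (Submodule.mem_sup_left ?_)⟩
  change d q - (z : X) ∈ P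
  simpa [hpq] using hp

theorem ker_mapOfCommute_le_range_inclusion (hd : d * d = 0) {f : Module.End R X}
    (hf : Commute f d) (hQ : Q ≤ Q'.comap f) (hP : P ≤ P'.comap f) (hdQ : Q ≤ Q.comap d)
    (hdP' : P' ≤ P'.comap d) (hQ' : Q' ≤ P' ⊔ Q.map f) (hKQ : K ≤ Q) (hK : Q ⊓ P'.comap f ≤ K) :
    LinearMap.ker (mapOfCommute hf hQ hP) ≤ LinearMap.range (inclusion d hKQ (le_refl P)) := by
  intro ξ hξ
  obtain ⟨z, rfl⟩ := mk_surjective ξ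
  obtain ⟨p, hp, q', hq', hpq⟩ := mem_relBoundaries.1 (mk_eq_zero_iff.1 hξ)
  obtain ⟨p', hp', _, ⟨q, hq, rfl⟩, rfl⟩ := Submodule.mem_sup.1 (hQ' hq')
  have hfd : f (d q) = d (f q) := DFunLike.congr_fun hf.eq q
  have hfz : f (z - d q) = p + d p' := by
    rw [map_sub, hfd, ← show p + d (p' + f q) = f z from hpq, map_add]
    abel
  have hz : (z - d q : X) ∈ relCycles d K P := by
    refine mem_relCycles.2 ⟨hK ⟨sub_mem z.2.1 (hdQ hq), ?_⟩, ?_⟩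
    · exact Submodule.mem_comap.2 (hfz ▸ add_mem hp (hdP' hp'))
    · rw [map_sub, show d (d q) = 0 from DFunLike.congr_fun hd q, sub_zero]
      exact z.2.2
  refine ⟨mk d K P ⟨_, hz⟩, mk_eq_mk_iff.2 (Submodule.mem_sup_right ⟨-q, neg_mem hq, ?_⟩)⟩
  simp

theorem exists_fin_sub_sum_smul_mem_relBoundaries [Module.Finite R (RelHomology d Q P)] :
    ∃ (r : ℕ) (y : Fin r → X), (∀ j, y j ∈ relCycles d Q P) ∧
      ∀ z ∈ relCycles d Q P, ∃ a : Fin r → R, z - ∑ j, a j • y j ∈ relBoundaries d Q P := by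
  obtain ⟨r, ξ, hξ⟩ := Module.Finite.exists_fin (R := R) (M := RelHomology d Q P)
  choose y hy using fun j => mk_surjective (ξ j)
  refine ⟨r, fun j => y j, fun j => (y j).2, fun z hz => ?_⟩
  obtain ⟨a, ha⟩ := (Submodule.mem_span_range_iff_exists_fun R).1
    (hξ ▸ Submodule.mem_top : mk d Q P ⟨z, hz⟩ ∈ Submodule.span R (Set.range ξ))
  refine ⟨a, ?_⟩
  have h : mk d Q P ⟨z, hz⟩ = mk d Q P (∑ j, a j • y j) := by
    simp only [map_sum, map_smul, hy, ha]
  simpa using mk_eq_mk_iff.1 h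

theorem isNoetherian_of_le_sup [IsNoetherian R N] (hPQ : P ≤ Q) (hdP : P ≤ P.comap d)
    (hQ : Q ≤ P ⊔ N) : IsNoetherian R (RelHomology d Q P) := by
  have : IsNoetherian R ↥(N ⊓ relCycles d Q P) := isNoetherian_of_le inf_le_left
  refine isNoetherian_of_surjective
    (mk d Q P ∘ₗ Submodule.inclusion (inf_le_right : N ⊓ relCycles d Q P ≤ _))
    (LinearMap.range_eq_top.2 fun ξ => ?_)
  obtain ⟨z, rfl⟩ := mk_surjective ξ
  obtain ⟨p, hp, y, hy, hpy⟩ := Submodule.mem_sup.1 (hQ z.2.1)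
  have hpZ : p ∈ relCycles d Q P := ⟨hPQ hp, hdP hp⟩
  have hyZ : y ∈ relCycles d Q P := eq_sub_of_add_eq' hpy ▸ sub_mem z.2 hpZ
  refine ⟨⟨y, hy, hyZ⟩, mk_eq_mk_iff.2 (Submodule.mem_sup_left ?_)⟩
  simpa [← hpy] using hp

end RelHomology

end RelativeHomology

section GradedModule

open DirectSum SetLike

variable {ι A M σ τ : Type*} [DecidableEq ι] [AddGroup ι] [Ring A] [AddCommGroup M]
  [Module A M] [SetLike σ A] [SetLike τ M] [AddSubgroupClass τ M] {𝒜 : ι → σ} {ℳ : ι → τ}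

theorem coe_decompose_smul_add_of_left_mem [Decomposition ℳ] [GradedSMul 𝒜 ℳ] {i ν : ι} {a : A}
    (ha : a ∈ 𝒜 i) (m : M) :
    (decompose ℳ (a • m) (i + ν) : M) = a • (decompose ℳ m ν : M) := by
  induction m using Decomposition.inductionOn ℳ with
  | zero => simp
  | @homogeneous j m =>
    have hm : a • (m : M) ∈ ℳ (i + j) := GradedSMul.smul_mem ha m.2
    obtain rfl | hj := eq_or_ne j ν
    · rw [decompose_of_mem_same ℳ hm, decompose_of_mem_same ℳ m.2]
    · rw [decompose_of_mem_ne ℳ hm (by simpa using hj), decompose_of_mem_ne ℳ m.2 hj, smul_zero]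
  | add m m' hm hm' => simp [smul_add, hm, hm']

variable [AddSubgroupClass σ A] [GradedRing 𝒜] [GradedSMul 𝒜 ℳ]

variable (𝒜 ℳ) in
/-- The degree `μ` piece of a graded module, as a module over the degree zero subring. -/
def gradedPiece (μ : ι) : Submodule (GradeZero.subring 𝒜) M where
  carrier := ℳ μ
  add_mem' := add_mem
  zero_mem' := zero_mem (ℳ μ)
  smul_mem' a m hm := by
    have h : (a : A) • m ∈ ℳ (0 + μ) := GradedSMul.smul_mem (show (a : A) ∈ 𝒜 0 from a.2) hm
    rwa [zero_add] at h

variable [Decomposition ℳ]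

theorem coe_decompose_smul_add_of_right_mem {i ν : ι} (a : A) {m : M} (hm : m ∈ ℳ ν) :
    (decompose ℳ (a • m) (i + ν) : M) = (decompose 𝒜 a i : A) • m := by
  induction a using Decomposition.inductionOn 𝒜 with
  | zero => simp
  | @homogeneous j a =>
    have ham : (a : A) • m ∈ ℳ (j + ν) := GradedSMul.smul_mem a.2 hm
    obtain rfl | hj := eq_or_ne j i
    · rw [decompose_of_mem_same ℳ ham, decompose_of_mem_same 𝒜 a.2]
    · rw [decompose_of_mem_ne ℳ ham (by simpa using hj), decompose_of_mem_ne 𝒜 a.2 hj, zero_smul]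
  | add a b ha hb => simp [add_smul, ha, hb]

theorem mem_of_mem_span_of_le_gradedPiece {μ : ι} {N : Submodule (GradeZero.subring 𝒜) M}
    (hN : N ≤ gradedPiece 𝒜 ℳ μ) {m : M} (hm : m ∈ ℳ μ)
    (hs : m ∈ Submodule.span A (N : Set M)) : m ∈ N := by
  suffices h : (decompose ℳ m μ : M) ∈ N by rwa [decompose_of_mem_same ℳ hm] at h
  clear hm
  induction hs using Submodule.closure_induction with
  | zero => simp
  | add y z _ _ hy hz => simpa using add_mem hy hz
  | smul_mem a y hy =>
    have h := coe_decompose_smul_add_of_right_mem (𝒜 := 𝒜) (ℳ := ℳ) (i := 0) (ν := μ) a (hN hy)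
    rw [zero_add] at h
    exact h ▸ N.smul_mem ⟨_, (decompose 𝒜 a 0).2⟩ hy

instance isNoetherian_gradedPiece [IsNoetherian A M] (μ : ι) :
    IsNoetherian (GradeZero.subring 𝒜) (gradedPiece 𝒜 ℳ μ) := by
  let extend (N : Submodule (GradeZero.subring 𝒜) (gradedPiece 𝒜 ℳ μ)) : Submodule A M :=
    Submodule.span A (N.map (gradedPiece 𝒜 ℳ μ).subtype : Set M)
  have hextend : ∀ N N', extend N ≤ extend N' ↔ N ≤ N' := by
    refine fun N N' => ⟨fun h y hy => ?_, fun h => Submodule.span_mono (Submodule.map_mono h)⟩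
    have hy' : (y : M) ∈ extend N' := h (Submodule.subset_span ⟨y, hy, rfl⟩)
    obtain ⟨z, hz, hzy⟩ :=
      mem_of_mem_span_of_le_gradedPiece (Submodule.map_subtype_le _ N') y.2 hy'
    exact Subtype.ext hzy ▸ hz
  exact isNoetherian_iff'.2 (OrderEmbedding.ofMapLEIff extend hextend).strictMono.wellFoundedGT

end GradedModule

section Homogeneous

open DirectSum SetLike
open scoped Pointwise

variable {ι A M σ τ : Type*} [DecidableEq ι] [AddCommGroup ι] [CommRing A] [AddCommGroup M]
  [Module A M] [SetLike σ A] [SetLike τ M] [AddSubgroupClass τ M] {𝒜 : ι → σ} {ℳ : ι → τ}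
  [Decomposition ℳ] [GradedSMul 𝒜 ℳ] {P Q : Submodule A M} {i : ι} {a : A}

theorem exists_add_smul_of_mem_sup_smul (hP : P.IsHomogeneous ℳ) (hQ : Q.IsHomogeneous ℳ)
    (ha : a ∈ 𝒜 i) {ν : ι} {m : M} (hm : m ∈ P ⊔ a • Q) :
    ∃ p ∈ P, p ∈ ℳ (i + ν) ∧ ∃ q ∈ Q, q ∈ ℳ ν ∧ p + a • q = decompose ℳ m (i + ν) := by
  obtain ⟨p, hp, _, ⟨q, hq, rfl⟩, rfl⟩ := Submodule.mem_sup.1 hm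
  refine ⟨_, hP _ hp, (decompose ℳ p _).2, _, hQ ν hq, (decompose ℳ q ν).2, ?_⟩
  simp [coe_decompose_smul_add_of_left_mem ha]

theorem isHomogeneous_sup_smul (hP : P.IsHomogeneous ℳ) (hQ : Q.IsHomogeneous ℳ)
    (ha : a ∈ 𝒜 i) : (P ⊔ a • Q).IsHomogeneous ℳ := by
  intro μ m hm
  obtain ⟨p, hp, -, q, hq, -, h⟩ :=
    exists_add_smul_of_mem_sup_smul hP hQ ha (ν := -i + μ) hm
  rw [add_neg_cancel_left] at h
  exact h ▸ Submodule.add_mem_sup hp (Submodule.smul_mem_pointwise_smul q a Q hq)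

theorem isHomogeneous_inf_comap_lsmul (hP : P.IsHomogeneous ℳ) (hQ : Q.IsHomogeneous ℳ)
    (ha : a ∈ 𝒜 i) : (Q ⊓ P.comap (LinearMap.lsmul A M a)).IsHomogeneous ℳ := by
  refine fun μ m hm => ⟨hQ μ hm.1, ?_⟩
  have h := hP (i + μ) hm.2
  rwa [LinearMap.lsmul_apply, coe_decompose_smul_add_of_left_mem ha] at h

end Homogeneous

section LargeDegree

open DirectSum SetLike

variable {ι M τ : Type*} [LinearOrder ι] [AddCommGroup M] [SetLike τ M] [AddSubgroupClass τ M]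
  {ℳ : ι → τ} [Decomposition ℳ]

theorem exists_forall_gt_decompose_eq_zero [Nonempty ι] (s : Finset M) :
    ∃ e, ∀ μ > e, ∀ m ∈ s, (decompose ℳ m μ : M) = 0 := by
  classical
  obtain ⟨e, he⟩ := (s.biUnion fun m => (decompose ℳ m).support).bddAbove
  refine ⟨e, fun μ hμ m hm => ?_⟩
  by_contra hne
  refine hμ.not_ge (he (Finset.mem_biUnion.2 ⟨m, hm, DFinsupp.mem_support_iff.2 fun h => hne ?_⟩))
  rw [h, ZeroMemClass.coe_zero]

variable {A σ : Type*} [AddCommGroup ι] [IsOrderedAddMonoid ι] [Ring A] [Module A M] [SetLike σ A]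
  [AddSubgroupClass σ A] {𝒜 : ι → σ} [GradedRing 𝒜] [GradedSMul 𝒜 ℳ] {P Q : Submodule A M}

theorem exists_forall_gt_mem_of_pos_smul_mem (hQfg : Q.FG) (hQ : Q.IsHomogeneous ℳ)
    (hPQ : ∀ i > 0, ∀ a ∈ 𝒜 i, ∀ q ∈ Q, a • q ∈ P) :
    ∃ e : ι, ∀ μ > e, ∀ m ∈ Q, m ∈ ℳ μ → m ∈ P := by
  obtain ⟨s, rfl⟩ := hQfg
  obtain ⟨e, he⟩ := exists_forall_gt_decompose_eq_zero (ℳ := ℳ) s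
  refine ⟨e, fun μ hμ m hm hmμ => ?_⟩
  suffices h : (decompose ℳ m μ : M) ∈ P by rwa [decompose_of_mem_same ℳ hmμ] at h
  clear hmμ
  induction hm using Submodule.closure_induction with
  | zero => simp
  | add y z _ _ hy hz => simpa using add_mem hy hz
  | smul_mem a q hq =>
    induction a using Decomposition.inductionOn 𝒜 with
    | zero => simp
    | @homogeneous j a =>
      rw [← add_sub_cancel j μ, coe_decompose_smul_add_of_left_mem a.2]
      obtain hj | hj := lt_or_ge 0 j
      · exact hPQ j hj a a.2 _ (hQ _ (Submodule.subset_span hq))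
      · rw [he (μ - j) (hμ.trans_le (le_sub_self_iff μ |>.2 hj)) q hq, smul_zero]
        exact P.zero_mem
    | add a b ha hb => simpa [add_smul] using add_mem ha hb

end LargeDegree

section TotalCechComplex

variable {A : Type} [CommRing A] {n : ℕ} (x : Fin n → A) {M : Type} [AddCommGroup M] [Module A M]
  {S T U : Finset (Fin n)} {k l : ℕ} {m m' : M}

/-- The fractions `m / x_T ^ k`, where `x_T` is the product of the `x i` with `i ∈ T`. -/
noncomputable def cechFrac (T : Finset (Fin n)) (k : ℕ) : M →ₗ[A] cechL A x M T where
  toFun m := LocalizedModule.mk m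
    ⟨(∏ i ∈ T, x i) ^ k, Submonoid.pow_mem _ (Submonoid.mem_powers _) k⟩
  map_add' m m' := by
    rw [LocalizedModule.mk_add_mk, ← smul_add, LocalizedModule.mk_cancel_common_left]
  map_smul' a m := by rw [RingHom.id_apply, LocalizedModule.smul'_mk]

variable {x}

theorem cechFrac_eq_cechFrac_iff : cechFrac x T k m = cechFrac x T l m' ↔
    ∃ r : ℕ, (∏ i ∈ T, x i) ^ r • (∏ i ∈ T, x i) ^ l • m =
      (∏ i ∈ T, x i) ^ r • (∏ i ∈ T, x i) ^ k • m' := by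
  change LocalizedModule.mk m _ = LocalizedModule.mk m' _ ↔ _
  rw [LocalizedModule.mk_eq]
  constructor
  · rintro ⟨⟨_, r, rfl⟩, h⟩
    exact ⟨r, h⟩
  · rintro ⟨r, h⟩
    exact ⟨⟨_, r, rfl⟩, h⟩

theorem exists_cechFrac_eq (c : cechL A x M T) : ∃ k m, cechFrac x T k m = c := by
  induction c using LocalizedModule.induction_on with
  | h m s =>
    obtain ⟨_, k, rfl⟩ := s
    exact ⟨k, m, rfl⟩

theorem cechFrac_add_pow_smul (k l : ℕ) (m : M) :
    cechFrac x T (k + l) ((∏ i ∈ T, x i) ^ l • m) = cechFrac x T k m :=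
  cechFrac_eq_cechFrac_iff.2 ⟨0, by simp only [smul_smul, pow_add]⟩

theorem pow_smul_cechFrac (k : ℕ) (m : M) :
    (∏ i ∈ T, x i) ^ k • cechFrac x T k m = cechFrac x T 0 m := by
  simpa using cechFrac_add_pow_smul (x := x) (T := T) 0 k m

theorem pow_smul_cechL_injective (h : S ⊆ T) (k : ℕ) :
    Function.Injective fun c : cechL A x M T => (∏ i ∈ S, x i) ^ k • c := by
  have hprod : (∏ i ∈ T, x i) ^ k = (∏ i ∈ T \ S, x i) ^ k * (∏ i ∈ S, x i) ^ k := by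
    rw [← mul_pow, Finset.prod_sdiff h]
  have hT := IsLocalizedModule.smul_injective
    (LocalizedModule.mkLinearMap (Submonoid.powers (∏ i ∈ T, x i)) M)
    ⟨(∏ i ∈ T, x i) ^ k, pow_mem (Submonoid.mem_powers _) k⟩
  refine fun c c' (hc : _ • c = _ • c') => hT ?_
  change (∏ i ∈ T, x i) ^ k • c = (∏ i ∈ T, x i) ^ k • c'
  rw [hprod, mul_smul, mul_smul, hc]

theorem cechMap_cechFrac_zero (h : S ⊆ T) (m : M) :
    cechMap A x M S T h (cechFrac x S 0 m) = cechFrac x T 0 m := by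
  have hfrac (U : Finset (Fin n)) : cechFrac x U 0 m = LocalizedModule.mkLinearMap _ M m := by
    rw [LocalizedModule.mkLinearMap_apply,
      ← pow_zero (⟨∏ i ∈ U, x i, 1, pow_one _⟩ : Submonoid.powers _)]
    rfl
  rw [hfrac, hfrac, cechMap, ← LinearMap.comp_apply, LocalizedModule.lift_comp]

theorem cechMap_cechFrac (h : S ⊆ T) (k : ℕ) (m : M) :
    cechMap A x M S T h (cechFrac x S k m) = cechFrac x T k ((∏ i ∈ T \ S, x i) ^ k • m) := by
  apply pow_smul_cechL_injective h k
  change (∏ i ∈ S, x i) ^ k • _ = (∏ i ∈ S, x i) ^ k • _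
  rw [← map_smul, pow_smul_cechFrac, cechMap_cechFrac_zero, ← map_smul, smul_smul, ← mul_pow,
    mul_comm, Finset.prod_sdiff h, map_smul, pow_smul_cechFrac]

theorem cechMap_cechMap (h : S ⊆ T) (h' : T ⊆ U) (c : cechL A x M S) :
    cechMap A x M T U h' (cechMap A x M S T h c) = cechMap A x M S U (h.trans h') c := by
  obtain ⟨k, m, rfl⟩ := exists_cechFrac_eq c
  apply pow_smul_cechL_injective (h.trans h') k
  change (∏ i ∈ S, x i) ^ k • _ = (∏ i ∈ S, x i) ^ k • _
  rw [← map_smul, ← map_smul, ← map_smul (cechMap A x M S U _), pow_smul_cechFrac,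
    cechMap_cechFrac_zero, cechMap_cechFrac_zero, cechMap_cechFrac_zero]

variable (A) in
/-- The sign of the face `T \ {j}` of `T` in the Čech differential. -/
def cechSign (T : Finset (Fin n)) (j : Fin n) : A :=
  (-1) ^ (T.filter (· < j)).card

theorem cechSign_mul_self (T : Finset (Fin n)) (j : Fin n) :
    cechSign A T j * cechSign A T j = 1 := by
  rw [cechSign, ← mul_pow, neg_one_mul, neg_neg, one_pow]

theorem cechSign_smul_mem {X : Type*} [AddCommGroup X] [Module A X] {N : AddSubgroup X} {y : X}
    (hy : y ∈ N) (T : Finset (Fin n)) (j : Fin n) : cechSign A T j • y ∈ N := by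
  obtain h | h := neg_one_pow_eq_or A (T.filter (· < j)).card
  · rwa [cechSign, h, one_smul]
  · rw [cechSign, h, neg_one_smul]
    exact neg_mem hy

theorem cechSign_mul_cechSign_erase_of_lt {i j : Fin n} (hi : i ∈ T) (hij : i < j) :
    cechSign A T i * cechSign A (T.erase i) j = -(cechSign A T j * cechSign A (T.erase j) i) := by
  have hcard : (T.filter (· < j)).card = ((T.erase i).filter (· < j)).card + 1 := by
    rw [Finset.filter_erase, Finset.card_erase_add_one (by simp [hi, hij])]
  have hfilter : (T.erase j).filter (· < i) = T.filter (· < i) := by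
    rw [Finset.filter_erase, Finset.erase_eq_of_notMem (by simp [hij.le])]
  rw [cechSign, cechSign, cechSign, cechSign, hcard, hfilter, pow_succ]
  ring

theorem cechSign_mul_cechSign_erase {i j : Fin n} (hi : i ∈ T) (hj : j ∈ T) (hij : i ≠ j) :
    cechSign A T i * cechSign A (T.erase i) j = -(cechSign A T j * cechSign A (T.erase j) i) := by
  obtain h | h := hij.lt_or_gt
  · exact cechSign_mul_cechSign_erase_of_lt hi h
  · rw [cechSign_mul_cechSign_erase_of_lt hj h, neg_neg]

variable (x M) in
/-- The product of all the terms of the Čech complex. Cochains of all cohomological degrees are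
treated at once, so that the complex becomes a single module with a differential. -/
abbrev CechTotal : Type :=
  ∀ T : Finset (Fin n), cechL A x M T

variable (x M) in
/-- The Čech differential on all cochains at once. -/
noncomputable def cechTotalD : Module.End A (CechTotal x M) :=
  LinearMap.pi fun T => ∑ j ∈ T,
    cechSign A T j • cechMap A x M (T.erase j) T (T.erase_subset j) ∘ₗ LinearMap.proj (T.erase j)

theorem cechTotalD_apply (c : CechTotal x M) (T : Finset (Fin n)) :
    cechTotalD x M c T =
      ∑ j ∈ T, cechSign A T j • cechMap A x M (T.erase j) T (T.erase_subset j) (c (T.erase j)) := by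
  simp [cechTotalD]

theorem cechMap_congr (c : CechTotal x M) (hS : S ⊆ U) (hT : T ⊆ U) (h : S = T) :
    cechMap A x M S U hS (c S) = cechMap A x M T U hT (c T) := by
  subst h
  rfl

theorem cechTotalD_apply_insert {c : CechTotal x M} {j : Fin n} (hj : j ∉ S)
    (hc : ∀ T, j ∈ T → c T = 0) : cechTotalD x M c (insert j S) =
      cechSign A (insert j S) j • cechMap A x M S (insert j S) (S.subset_insert j) (c S) := by
  rw [cechTotalD_apply, Finset.sum_eq_single_of_mem j (S.mem_insert_self j),
    cechMap_congr c _ (S.subset_insert j) (Finset.erase_insert hj)]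
  intro i _ hij
  rw [hc _ (Finset.mem_erase.2 ⟨hij.symm, S.mem_insert_self j⟩), map_zero, smul_zero]

theorem cechTotalD_mul_self : cechTotalD x M * cechTotalD x M = 0 := by
  refine LinearMap.ext fun c => funext fun T => ?_
  simp only [Module.End.mul_apply, cechTotalD_apply, map_sum, map_smul, cechMap_cechMap,
    Finset.smul_sum, smul_smul, LinearMap.zero_apply, Pi.zero_apply]
  rw [Finset.sum_sigma']
  refine Finset.sum_involution (fun p _ => ⟨p.2, p.1⟩) ?_ ?_ ?_ ?_
  · rintro ⟨j, i⟩ h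
    simp only [Finset.mem_sigma, Finset.mem_erase] at h
    simp only
    rw [cechSign_mul_cechSign_erase h.1 h.2.2 h.2.1.symm, neg_smul,
      cechMap_congr c _ ((Finset.erase_subset _ _).trans (Finset.erase_subset _ _))
        (Finset.erase_right_comm (a := j) (b := i))]
    exact neg_add_cancel _
  · rintro ⟨j, i⟩ h - heq
    simp only [Finset.mem_sigma, Finset.mem_erase] at h
    exact h.2.1 (congrArg Sigma.fst heq)
  · rintro ⟨j, i⟩ h
    simp only [Finset.mem_sigma, Finset.mem_erase] at h ⊢
    exact ⟨h.2.2, h.2.1.symm, h.1⟩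
  · exact fun _ _ => rfl

end TotalCechComplex

section GradedFractions

open DirectSum SetLike Filter
open scoped Pointwise

variable {A : Type} [CommRing A] (𝒜 : ℤ → AddSubgroup A)
  {n : ℕ} (x : Fin n → A) {M : Type} [AddCommGroup M] [Module A M] (ℳ : ℤ → AddSubgroup M)
  [GradedSMul 𝒜 ℳ] (w : Fin n → ℤ)

variable {𝒜 ℳ} in
theorem smul_mem_of_eq_add {i μ ν : ℤ} {a : A} (ha : a ∈ 𝒜 i) {m : M} (hm : m ∈ ℳ ν)
    (h : μ = i + ν) : a • m ∈ ℳ μ :=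
  h ▸ GradedSMul.smul_mem ha hm

variable [GradedRing 𝒜]

/-- The homogeneous fractions `q / x_T ^ k` of degree `μ` with `q` in the submodule `Q`. -/
noncomputable def gradedFrac (Q : Submodule A M) (μ : ℤ) (T : Finset (Fin n)) :
    Submodule (GradeZero.subring 𝒜) (cechL A x M T) :=
  ⨆ k : ℕ, (Q.restrictScalars (GradeZero.subring 𝒜) ⊓ gradedPiece 𝒜 ℳ (μ + k * ∑ i ∈ T, w i)).map
    ((cechFrac x T k).restrictScalars (GradeZero.subring 𝒜))

variable {𝒜 ℳ x w} {P Q Q' : Submodule A M} {μ i : ℤ} {a : A} {S T : Finset (Fin n)} {j : Fin n}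

theorem gradedFrac_mono (hPQ : P ≤ Q) (μ : ℤ) (T : Finset (Fin n)) :
    gradedFrac 𝒜 x ℳ w P μ T ≤ gradedFrac 𝒜 x ℳ w Q μ T :=
  iSup_mono fun _ => Submodule.map_mono (inf_le_inf_right _ hPQ)

theorem pow_mem_grade_mul (ha : a ∈ 𝒜 i) (k : ℕ) : a ^ k ∈ 𝒜 (k * i) := by
  simpa using pow_mem_graded k ha

theorem prod_mem_grade_sum (hx : ∀ i, x i ∈ 𝒜 (w i)) (T : Finset (Fin n)) :
    ∏ i ∈ T, x i ∈ 𝒜 (∑ i ∈ T, w i) :=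
  prod_mem_graded 𝒜 w x fun i _ => hx i

variable (hx : ∀ i, x i ∈ 𝒜 (w i))
include hx

theorem monotone_map_cechFrac (Q : Submodule A M) (μ : ℤ) (T : Finset (Fin n)) :
    Monotone fun k : ℕ => (Q.restrictScalars (GradeZero.subring 𝒜) ⊓
      gradedPiece 𝒜 ℳ (μ + k * ∑ i ∈ T, w i)).map
        ((cechFrac x T k).restrictScalars (GradeZero.subring 𝒜)) := by
  intro k l hkl
  obtain ⟨r, rfl⟩ := Nat.exists_eq_add_of_le hkl
  rintro _ ⟨m, ⟨hmQ, hm⟩, rfl⟩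
  refine ⟨(∏ i ∈ T, x i) ^ r • m, ⟨Q.smul_mem _ hmQ, ?_⟩, cechFrac_add_pow_smul k r m⟩
  refine smul_mem_of_eq_add (pow_mem_grade_mul (prod_mem_grade_sum hx T) r) hm ?_
  push_cast
  ring

theorem mem_gradedFrac {c : cechL A x M T} : c ∈ gradedFrac 𝒜 x ℳ w Q μ T ↔
    ∃ k : ℕ, ∃ m ∈ Q, m ∈ ℳ (μ + k * ∑ i ∈ T, w i) ∧ cechFrac x T k m = c := by
  rw [gradedFrac, Submodule.mem_iSup_of_directed _ (monotone_map_cechFrac hx Q μ T).directed_le]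
  simp only [Submodule.mem_map, Submodule.mem_inf, and_assoc]
  rfl

theorem eventually_exists_cechFrac_eq {c : cechL A x M T} (hc : c ∈ gradedFrac 𝒜 x ℳ w Q μ T) :
    ∀ᶠ k : ℕ in atTop, ∃ m ∈ Q, m ∈ ℳ (μ + k * ∑ i ∈ T, w i) ∧ cechFrac x T k m = c := by
  rw [gradedFrac, Submodule.mem_iSup_of_directed _ (monotone_map_cechFrac hx Q μ T).directed_le]
    at hc
  obtain ⟨k, hk⟩ := hc
  filter_upwards [eventually_ge_atTop k] with l hl
  obtain ⟨m, ⟨hmQ, hm⟩, hmc⟩ := monotone_map_cechFrac hx Q μ T hl hk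
  exact ⟨m, hmQ, hm, hmc⟩

theorem cechFrac_mem_gradedFrac_iff {k : ℕ} {m : M} (hm : m ∈ ℳ (μ + k * ∑ i ∈ T, w i)) :
    cechFrac x T k m ∈ gradedFrac 𝒜 x ℳ w Q μ T ↔ ∃ l : ℕ, (∏ i ∈ T, x i) ^ l • m ∈ Q := by
  rw [mem_gradedFrac hx]
  constructor
  · rintro ⟨k', m', hm'Q, -, h⟩
    obtain ⟨r, hr⟩ := cechFrac_eq_cechFrac_iff.1 h.symm
    exact ⟨r + k', by rw [pow_add, mul_smul, hr]; exact Q.smul_mem _ (Q.smul_mem _ hm'Q)⟩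
  · rintro ⟨l, hl⟩
    refine ⟨k + l, _, hl, smul_mem_of_eq_add
      (pow_mem_grade_mul (prod_mem_grade_sum hx T) l) hm ?_, cechFrac_add_pow_smul k l m⟩
    push_cast
    ring

theorem smul_mem_gradedFrac (ha : a ∈ 𝒜 i) (haQ : ∀ q ∈ Q, a • q ∈ Q') {c : cechL A x M T}
    (hc : c ∈ gradedFrac 𝒜 x ℳ w Q μ T) : a • c ∈ gradedFrac 𝒜 x ℳ w Q' (i + μ) T := by
  obtain ⟨k, m, hmQ, hm, rfl⟩ := (mem_gradedFrac hx).1 hc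
  exact (mem_gradedFrac hx).2
    ⟨k, a • m, haQ m hmQ, smul_mem_of_eq_add ha hm (add_assoc _ _ _), map_smul _ a m⟩

theorem cechMap_mem_gradedFrac (h : S ⊆ T) {c : cechL A x M S}
    (hc : c ∈ gradedFrac 𝒜 x ℳ w Q μ S) : cechMap A x M S T h c ∈ gradedFrac 𝒜 x ℳ w Q μ T := by
  obtain ⟨k, m, hmQ, hm, rfl⟩ := (mem_gradedFrac hx).1 hc
  refine (mem_gradedFrac hx).2 ⟨k, _, Q.smul_mem _ hmQ, smul_mem_of_eq_add
    (pow_mem_grade_mul (prod_mem_grade_sum hx (T \ S)) k) hm ?_, (cechMap_cechFrac h k m).symm⟩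
  rw [← Finset.sum_sdiff h]
  ring

theorem mem_gradedFrac_inf_comap (ha : a ∈ 𝒜 i) {c : cechL A x M T}
    (hc : c ∈ gradedFrac 𝒜 x ℳ w Q μ T) (hac : a • c ∈ gradedFrac 𝒜 x ℳ w P (i + μ) T) :
    c ∈ gradedFrac 𝒜 x ℳ w (Q ⊓ P.comap (LinearMap.lsmul A M a)) μ T := by
  obtain ⟨k, m, hmQ, hm, rfl⟩ := (mem_gradedFrac hx).1 hc
  rw [← map_smul, cechFrac_mem_gradedFrac_iff hx
    (smul_mem_of_eq_add ha hm (add_assoc _ _ _))] at hac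
  obtain ⟨l, hl⟩ := hac
  refine (cechFrac_mem_gradedFrac_iff hx hm).2 ⟨l, Q.smul_mem _ hmQ, ?_⟩
  rwa [smul_comm] at hl

theorem exists_add_smul_of_mem_gradedFrac_sup_smul [Decomposition ℳ] (hP : P.IsHomogeneous ℳ)
    (hQ : Q.IsHomogeneous ℳ) (ha : a ∈ 𝒜 i) {c : cechL A x M T}
    (hc : c ∈ gradedFrac 𝒜 x ℳ w (P ⊔ a • Q) (i + μ) T) :
    ∃ p ∈ gradedFrac 𝒜 x ℳ w P (i + μ) T, ∃ q ∈ gradedFrac 𝒜 x ℳ w Q μ T, p + a • q = c := by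
  obtain ⟨k, m, hmQ, hm, rfl⟩ := (mem_gradedFrac hx).1 hc
  rw [add_assoc] at hm
  obtain ⟨p, hpP, hp, q, hqQ, hq, hpq⟩ := exists_add_smul_of_mem_sup_smul hP hQ ha hmQ
  rw [decompose_of_mem_same ℳ hm] at hpq
  refine ⟨_, (mem_gradedFrac hx).2 ⟨k, p, hpP, by rwa [add_assoc], rfl⟩,
    _, (mem_gradedFrac hx).2 ⟨k, q, hqQ, hq, rfl⟩, ?_⟩
  rw [← map_smul, ← map_add, hpq]

theorem mem_gradedFrac_empty {c : cechL A x M ∅} :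
    c ∈ gradedFrac 𝒜 x ℳ w Q μ ∅ ↔ ∃ m ∈ Q, m ∈ ℳ μ ∧ cechFrac x ∅ 0 m = c := by
  have hfrac (k : ℕ) (m : M) : cechFrac x ∅ k m = cechFrac x ∅ 0 m :=
    cechFrac_eq_cechFrac_iff.2 ⟨0, by simp⟩
  simp [mem_gradedFrac hx, hfrac]

theorem gradedFrac_le_of_smul_mem (hT : T.Nonempty) (hPQ : ∀ i, ∀ q ∈ Q, x i • q ∈ P) (μ : ℤ) :
    gradedFrac 𝒜 x ℳ w Q μ T ≤ gradedFrac 𝒜 x ℳ w P μ T := by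
  intro c hc
  obtain ⟨k, m, hmQ, hm, rfl⟩ := (mem_gradedFrac hx).1 hc
  obtain ⟨j, hj⟩ := hT
  refine (cechFrac_mem_gradedFrac_iff hx hm).2 ⟨1, ?_⟩
  rw [pow_one, ← Finset.mul_prod_erase T x hj, mul_smul]
  exact hPQ j _ (Q.smul_mem _ hmQ)

theorem eventually_exists_cechMap_eq_pow_smul (hj : j ∉ S) {c : cechL A x M (insert j S)}
    (hc : c ∈ gradedFrac 𝒜 x ℳ w Q μ (insert j S)) :
    ∀ᶠ k : ℕ in atTop, ∃ b ∈ gradedFrac 𝒜 x ℳ w Q (k * w j + μ) S,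
      cechMap A x M S (insert j S) (S.subset_insert j) b = x j ^ k • c := by
  filter_upwards [eventually_exists_cechFrac_eq hx hc] with k ⟨m, hmQ, hm, hmc⟩
  refine ⟨cechFrac x S k m, (mem_gradedFrac hx).2 ⟨k, m, hmQ, ?_, rfl⟩, ?_⟩
  · rw [Finset.sum_insert hj] at hm
    convert hm using 2
    ring
  · rw [cechMap_cechFrac, Finset.insert_sdiff_cancel hj, Finset.prod_singleton,
      map_smul, hmc]

theorem eventually_pow_smul_mem_gradedFrac (hj : j ∉ S) {c : cechL A x M S}
    (hcQ : c ∈ gradedFrac 𝒜 x ℳ w Q μ S)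
    (hcP : cechMap A x M S (insert j S) (S.subset_insert j) c ∈
      gradedFrac 𝒜 x ℳ w P μ (insert j S)) :
    ∀ᶠ k : ℕ in atTop, x j ^ k • c ∈ gradedFrac 𝒜 x ℳ w P (k * w j + μ) S := by
  obtain ⟨k, m, -, hm, rfl⟩ := (mem_gradedFrac hx).1 hcQ
  rw [cechMap_cechFrac, Finset.insert_sdiff_cancel hj, Finset.prod_singleton,
    cechFrac_mem_gradedFrac_iff hx (smul_mem_of_eq_add (pow_mem_grade_mul (hx j) k) hm
      (by rw [Finset.sum_insert hj]; ring)), Finset.prod_insert hj] at hcP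
  obtain ⟨l, hl⟩ := hcP
  filter_upwards [eventually_ge_atTop (l + k)] with r hr
  obtain ⟨s, rfl⟩ := Nat.exists_eq_add_of_le' hr
  rw [← map_smul, cechFrac_mem_gradedFrac_iff hx
    (smul_mem_of_eq_add (pow_mem_grade_mul (hx j) _) hm (add_assoc _ _ _))]
  refine ⟨l, ?_⟩
  convert P.smul_mem (x j ^ s) hl using 1
  simp only [smul_smul]
  ring_nf

end GradedFractions

section GradedCochains

open DirectSum SetLike Filter
open scoped Pointwise

variable {A : Type} [CommRing A] (𝒜 : ℤ → AddSubgroup A) [GradedRing 𝒜]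
  {n : ℕ} (x : Fin n → A) {M : Type} [AddCommGroup M] [Module A M] (ℳ : ℤ → AddSubgroup M)
  [GradedSMul 𝒜 ℳ] (w : Fin n → ℤ)

/-- The cochains of degree `μ`, in all cohomological degrees, that come from the submodule `Q`. -/
noncomputable def gradedCochains (Q : Submodule A M) (μ : ℤ) :
    Submodule (GradeZero.subring 𝒜) (CechTotal x M) :=
  Submodule.pi Set.univ (gradedFrac 𝒜 x ℳ w Q μ)

variable (M) in
/-- The Čech differential as a map of modules over the degree zero subring. -/
noncomputable def gradedCechD : Module.End (GradeZero.subring 𝒜) (CechTotal x M) :=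
  (cechTotalD x M).restrictScalars (GradeZero.subring 𝒜)

variable {𝒜 ℳ x w} {P Q Q' : Submodule A M} {μ i : ℤ} {a : A} {j : Fin n} {c : CechTotal x M}

theorem mem_gradedCochains :
    c ∈ gradedCochains 𝒜 x ℳ w Q μ ↔ ∀ T, c T ∈ gradedFrac 𝒜 x ℳ w Q μ T := by
  simp only [gradedCochains, Submodule.mem_pi, Set.mem_univ, true_imp_iff]

theorem gradedCochains_mono (hPQ : P ≤ Q) (μ : ℤ) :
    gradedCochains 𝒜 x ℳ w P μ ≤ gradedCochains 𝒜 x ℳ w Q μ :=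
  Submodule.pi_mono fun T _ => gradedFrac_mono hPQ μ T

theorem gradedCechD_apply (c : CechTotal x M) : gradedCechD 𝒜 x M c = cechTotalD x M c :=
  rfl

theorem gradedCechD_mul_self : gradedCechD 𝒜 x M * gradedCechD 𝒜 x M = 0 :=
  LinearMap.ext fun c => DFunLike.congr_fun cechTotalD_mul_self c

variable (hx : ∀ i, x i ∈ 𝒜 (w i))
include hx

theorem gradedCochains_le_comap_gradedCechD (Q : Submodule A M) (μ : ℤ) :
    gradedCochains 𝒜 x ℳ w Q μ ≤ (gradedCochains 𝒜 x ℳ w Q μ).comap (gradedCechD 𝒜 x M) := by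
  intro c hc
  rw [mem_gradedCochains] at hc
  rw [Submodule.mem_comap, gradedCechD_apply, mem_gradedCochains]
  intro T
  rw [cechTotalD_apply]
  exact sum_mem fun j _ => cechSign_smul_mem (A := A)
    (N := (gradedFrac 𝒜 x ℳ w Q μ T).toAddSubgroup) (cechMap_mem_gradedFrac hx _ (hc _)) T j

theorem smul_mem_gradedCochains (ha : a ∈ 𝒜 i) (haQ : ∀ q ∈ Q, a • q ∈ Q')
    (hc : c ∈ gradedCochains 𝒜 x ℳ w Q μ) : a • c ∈ gradedCochains 𝒜 x ℳ w Q' (i + μ) :=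
  mem_gradedCochains.2 fun T => smul_mem_gradedFrac hx ha haQ (mem_gradedCochains.1 hc T)

theorem mem_gradedCochains_inf_comap (ha : a ∈ 𝒜 i) (hc : c ∈ gradedCochains 𝒜 x ℳ w Q μ)
    (hac : a • c ∈ gradedCochains 𝒜 x ℳ w P (i + μ)) :
    c ∈ gradedCochains 𝒜 x ℳ w (Q ⊓ P.comap (LinearMap.lsmul A M a)) μ :=
  mem_gradedCochains.2 fun T =>
    mem_gradedFrac_inf_comap hx ha (mem_gradedCochains.1 hc T) (mem_gradedCochains.1 hac T)

theorem exists_add_smul_of_mem_gradedCochains_sup_smul [Decomposition ℳ]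
    (hP : P.IsHomogeneous ℳ) (hQ : Q.IsHomogeneous ℳ) (ha : a ∈ 𝒜 i)
    (hc : c ∈ gradedCochains 𝒜 x ℳ w (P ⊔ a • Q) (i + μ)) :
    ∃ p ∈ gradedCochains 𝒜 x ℳ w P (i + μ), ∃ q ∈ gradedCochains 𝒜 x ℳ w Q μ, p + a • q = c := by
  choose p hp q hq hpq using fun T =>
    exists_add_smul_of_mem_gradedFrac_sup_smul hx hP hQ ha (mem_gradedCochains.1 hc T)
  exact ⟨p, mem_gradedCochains.2 hp, q, mem_gradedCochains.2 hq, funext hpq⟩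

theorem exists_pow_smul_sub_cechTotalD_eq_zero (j : Fin n)
    (hc : c ∈ gradedCochains 𝒜 x ℳ w Q μ) :
    ∃ k : ℕ, ∃ b ∈ gradedCochains 𝒜 x ℳ w Q (k * w j + μ),
      ∀ T, j ∈ T → (x j ^ k • c - cechTotalD x M b) T = 0 := by
  have hdiv : ∀ᶠ k : ℕ in atTop, ∀ S, ∃ b ∈ gradedFrac 𝒜 x ℳ w Q (k * w j + μ) S,
      (j ∈ S → b = 0) ∧ (j ∉ S → cechMap A x M S (insert j S) (S.subset_insert j) b =
        x j ^ k • cechSign A (insert j S) j • c (insert j S)) := by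
    refine eventually_all.2 fun S => ?_
    by_cases hj : j ∈ S
    · exact .of_forall fun k => ⟨0, zero_mem _, fun _ => rfl, fun h => absurd hj h⟩
    · filter_upwards [eventually_exists_cechMap_eq_pow_smul hx hj
        (cechSign_smul_mem (A := A) (N := (gradedFrac 𝒜 x ℳ w Q μ (insert j S)).toAddSubgroup)
          (mem_gradedCochains.1 hc (insert j S)) (insert j S) j)] with k ⟨b, hb, hbc⟩
      exact ⟨b, hb, fun h => absurd h hj, fun _ => hbc⟩
  obtain ⟨k, hk⟩ := hdiv.exists
  choose b hb hb0 hbc using hk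
  refine ⟨k, b, mem_gradedCochains.2 hb, fun T hT => ?_⟩
  obtain ⟨S, hj, rfl⟩ : ∃ S, j ∉ S ∧ insert j S = T :=
    ⟨T.erase j, T.notMem_erase j, Finset.insert_erase hT⟩
  rw [Pi.sub_apply, Pi.smul_apply, cechTotalD_apply_insert hj hb0, hbc S hj,
    smul_comm (cechSign A _ j), smul_smul (cechSign A _ j), cechSign_mul_self, one_smul, sub_self]

theorem exists_pow_smul_mem_gradedCochains (hc0 : ∀ T, j ∈ T → c T = 0)
    (hc : c ∈ gradedCochains 𝒜 x ℳ w Q μ)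
    (hdc : cechTotalD x M c ∈ gradedCochains 𝒜 x ℳ w P μ) :
    ∃ k : ℕ, x j ^ k • c ∈ gradedCochains 𝒜 x ℳ w P (k * w j + μ) := by
  suffices h : ∀ᶠ k : ℕ in atTop, ∀ S, x j ^ k • c S ∈ gradedFrac 𝒜 x ℳ w P (k * w j + μ) S from
    h.exists.imp fun k => mem_gradedCochains.2
  refine eventually_all.2 fun S => ?_
  by_cases hj : j ∈ S
  · exact .of_forall fun k => by simp [hc0 S hj]
  · have hd := cechSign_smul_mem (A := A) (N := (gradedFrac 𝒜 x ℳ w P μ (insert j S)).toAddSubgroup)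
      (mem_gradedCochains.1 hdc (insert j S)) (insert j S) j
    rw [cechTotalD_apply_insert hj hc0, smul_smul, cechSign_mul_self, one_smul] at hd
    exact eventually_pow_smul_mem_gradedFrac hx hj (mem_gradedCochains.1 hc S) hd

/-- Inverting `x j` makes the Čech complex contractible, so every class is killed by a power of
`x j`. -/
theorem exists_pow_smul_mem_relBoundaries (j : Fin n) {z : CechTotal x M}
    (hz : z ∈ relCycles (gradedCechD 𝒜 x M) (gradedCochains 𝒜 x ℳ w Q μ)
      (gradedCochains 𝒜 x ℳ w P μ)) :
    ∃ k : ℕ, x j ^ k • z ∈ relBoundaries (gradedCechD 𝒜 x M)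
      (gradedCochains 𝒜 x ℳ w Q (k * w j + μ)) (gradedCochains 𝒜 x ℳ w P (k * w j + μ)) := by
  have hpow (N : Submodule A M) (k : ℕ) {ν : ℤ} {c : CechTotal x M}
      (hc : c ∈ gradedCochains 𝒜 x ℳ w N ν) :
      x j ^ k • c ∈ gradedCochains 𝒜 x ℳ w N (k * w j + ν) :=
    smul_mem_gradedCochains hx (pow_mem_grade_mul (hx j) k) (fun q hq => N.smul_mem _ hq) hc
  obtain ⟨k, b, hb, hzb⟩ := exists_pow_smul_sub_cechTotalD_eq_zero hx j hz.1
  have hd : cechTotalD x M (x j ^ k • z - cechTotalD x M b) = x j ^ k • cechTotalD x M z := by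
    rw [map_sub, map_smul, show cechTotalD x M (cechTotalD x M b) = 0 from
      DFunLike.congr_fun cechTotalD_mul_self b, sub_zero]
  obtain ⟨l, hl⟩ := exists_pow_smul_mem_gradedCochains (P := P) hx hzb
    (sub_mem (hpow Q k hz.1) (gradedCochains_le_comap_gradedCechD hx Q _ hb))
    (hd ▸ hpow P k hz.2)
  have hdeg : ((l + k : ℕ) : ℤ) * w j + μ = l * w j + (k * w j + μ) := by
    push_cast
    ring
  refine ⟨l + k, mem_relBoundaries.2 ⟨_, hdeg ▸ hl, _, hdeg ▸ hpow Q l hb, ?_⟩⟩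
  rw [gradedCechD_apply, map_smul, ← smul_add, sub_add_cancel, smul_smul, pow_add]

end GradedCochains

section CechHomology

open DirectSum SetLike
open scoped Pointwise

theorem forall_of_forall_gt_of_add {p : ℤ → Prop} {d e : ℤ} (hd : 0 < d) (hp : ∀ μ > e, p μ)
    (hadd : ∀ μ, p (d + μ) → p μ) (μ : ℤ) : p μ := by
  suffices h : ∀ (N : ℕ) (ν : ℤ), e < ν + N → p ν from h (e - μ + 1).toNat μ (by omega)
  intro N
  induction N with
  | zero => exact fun ν hν => hp ν (by simpa using hν)
  | succ N ih => exact fun ν hν => hadd ν (ih _ (by push_cast at hν; omega))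

open scoped Pointwise

variable {A : Type} [CommRing A] (𝒜 : ℤ → AddSubgroup A)
  {n : ℕ} (x : Fin n → A) {M : Type} [AddCommGroup M] [Module A M] (ℳ : ℤ → AddSubgroup M)
  (w : Fin n → ℤ)

variable {𝒜 x} in
theorem pos_smul_mem_of_smul_mem {P Q : Submodule A M}
    (hA : irrelevantIdeal A 𝒜 ≤ Ideal.span (Set.range x))
    (hxQ : ∀ i, ∀ q ∈ Q, x i • q ∈ P) :
    ∀ i > 0, ∀ a ∈ 𝒜 i, ∀ q ∈ Q, a • q ∈ P := by
  intro i hi a ha q hq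
  suffices h : Ideal.span (Set.range x) ≤ P.comap ((LinearMap.lsmul A M).flip q) from
    h (hA (Ideal.subset_span ⟨i, hi, ha⟩))
  rw [Ideal.span_le, Set.range_subset_iff]
  exact fun i => hxQ i q hq

variable [GradedRing 𝒜] [GradedSMul 𝒜 ℳ]

/-- The degree `μ` piece of the Čech homology of the subquotient `Q / P` of `M`, in all
cohomological degrees at once. -/
abbrev CechHomology (Q P : Submodule A M) (μ : ℤ) : Type :=
  RelHomology (gradedCechD 𝒜 x M) (gradedCochains 𝒜 x ℳ w Q μ) (gradedCochains 𝒜 x ℳ w P μ)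

/-- The assertion of the theorem for the subquotient `Q / P` of `M`: its Čech homology vanishes in
large degrees and its graded pieces are Noetherian over the degree zero subring. -/
structure HasFiniteCechHomology (Q P : Submodule A M) : Prop where
  exists_forall_gt_subsingleton : ∃ e : ℤ, ∀ μ > e, Subsingleton (CechHomology 𝒜 x ℳ w Q P μ)
  isNoetherian (μ : ℤ) : IsNoetherian (GradeZero.subring 𝒜) (CechHomology 𝒜 x ℳ w Q P μ)

variable {𝒜 x ℳ w} {P Q Q' : Submodule A M} {μ : ℤ} {j : Fin n}

theorem sup_smul_le (hPQ : P ≤ Q) (a : A) : P ⊔ a • Q ≤ Q :=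
  sup_le hPQ (Submodule.smul_le_self_of_tower a Q)

namespace CechHomology

/-- The map on Čech homology induced by an inclusion of submodules. -/
noncomputable def inclusion (hQ : Q ≤ Q') (P : Submodule A M) (μ : ℤ) :
    CechHomology 𝒜 x ℳ w Q P μ →ₗ[GradeZero.subring 𝒜] CechHomology 𝒜 x ℳ w Q' P μ :=
  RelHomology.inclusion _ (gradedCochains_mono hQ μ) (le_refl _)

theorem ker_inclusion_le (hP : P ≤ Q') (hQ : Q' ≤ Q) (μ : ℤ) :
    LinearMap.ker (inclusion (𝒜 := 𝒜) (x := x) (ℳ := ℳ) (w := w) hQ P μ) ≤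
      LinearMap.range (RelHomology.connecting gradedCechD_mul_self (gradedCochains 𝒜 x ℳ w Q μ)
        (gradedCochains 𝒜 x ℳ w Q' μ) (gradedCochains 𝒜 x ℳ w P μ)) :=
  RelHomology.ker_inclusion_le_range_connecting _ (gradedCochains_mono hP μ) _

variable (hx : ∀ i, x i ∈ 𝒜 (w i))

/-- Multiplication by `x j` as a map from the homology of `Q / P` to that of
`(P + x j Q) / P`. -/
noncomputable def mulVar (Q P : Submodule A M) (μ : ℤ) (j : Fin n) :
    CechHomology 𝒜 x ℳ w Q P μ →ₗ[GradeZero.subring 𝒜]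
      CechHomology 𝒜 x ℳ w (P ⊔ x j • Q) P (w j + μ) :=
  RelHomology.mapOfCommute
    (f := (LinearMap.lsmul A (CechTotal x M) (x j)).restrictScalars (GradeZero.subring 𝒜))
    (LinearMap.ext fun c => ((cechTotalD x M).map_smul (x j) c).symm)
    (fun _ hc => smul_mem_gradedCochains hx (hx j) (fun q hq => Submodule.mem_sup_right
      (Submodule.smul_mem_pointwise_smul q (x j) Q hq)) hc)
    (fun _ hc => smul_mem_gradedCochains hx (hx j) (fun _ => P.smul_mem (x j)) hc)

variable [Decomposition ℳ]
include hx

theorem ker_mulVar_le (hP : P.IsHomogeneous ℳ) (hQ : Q.IsHomogeneous ℳ) (μ : ℤ) (j : Fin n) :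
    LinearMap.ker (mulVar hx Q P μ j) ≤ LinearMap.range (inclusion (𝒜 := 𝒜) (ℳ := ℳ) (w := w)
      (inf_le_left : Q ⊓ P.comap (LinearMap.lsmul A M (x j)) ≤ Q) P μ) := by
  refine RelHomology.ker_mapOfCommute_le_range_inclusion gradedCechD_mul_self _ _ _
    (gradedCochains_le_comap_gradedCechD hx Q μ) (gradedCochains_le_comap_gradedCechD hx P _) ?_ _
    (fun c hc => mem_gradedCochains_inf_comap hx (hx j) hc.1 hc.2)
  intro c hc
  obtain ⟨p, hp, q, hq, hpq⟩ :=
    exists_add_smul_of_mem_gradedCochains_sup_smul hx hP hQ (hx j) hc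
  exact Submodule.mem_sup.2 ⟨p, hp, _, ⟨q, hq, rfl⟩, hpq⟩

theorem mem_relBoundaries_of_smul_mem (hPQ : P ≤ Q) (hP : P.IsHomogeneous ℳ)
    (hQ : Q.IsHomogeneous ℳ)
    [Subsingleton (CechHomology 𝒜 x ℳ w (Q ⊓ P.comap (LinearMap.lsmul A M (x j))) P μ)]
    [Subsingleton (CechHomology 𝒜 x ℳ w Q (P ⊔ x j • Q) (w j + μ))] {z : CechTotal x M}
    (hz : z ∈ relCycles (gradedCechD 𝒜 x M) (gradedCochains 𝒜 x ℳ w Q μ)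
      (gradedCochains 𝒜 x ℳ w P μ))
    (hxz : x j • z ∈ relBoundaries (gradedCechD 𝒜 x M) (gradedCochains 𝒜 x ℳ w Q (w j + μ))
      (gradedCochains 𝒜 x ℳ w P (w j + μ))) :
    z ∈ relBoundaries (gradedCechD 𝒜 x M) (gradedCochains 𝒜 x ℳ w Q μ)
      (gradedCochains 𝒜 x ℳ w P μ) := by
  have hmul := injective_of_ker_le_range _ _ (ker_mulVar_le hx hP hQ μ j)
  have hincl := injective_of_ker_le_range _ _
    (ker_inclusion_le (𝒜 := 𝒜) (x := x) (ℳ := ℳ) (w := w) le_sup_left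
      (sup_smul_le hPQ (x j)) (w j + μ))
  refine RelHomology.mk_eq_zero_iff (z := ⟨z, hz⟩).1 (hmul (hincl ?_))
  rw [map_zero, map_zero]
  exact RelHomology.mk_eq_zero_iff.2 hxz

theorem subsingleton_of_forall_gt (hw : 0 < w j) (hPQ : P ≤ Q) (hP : P.IsHomogeneous ℳ)
    (hQ : Q.IsHomogeneous ℳ) {e : ℤ}
    (hK : ∀ μ > e,
      Subsingleton (CechHomology 𝒜 x ℳ w (Q ⊓ P.comap (LinearMap.lsmul A M (x j))) P μ))
    (hQ' : ∀ μ > e, Subsingleton (CechHomology 𝒜 x ℳ w Q (P ⊔ x j • Q) μ)) (hμ : μ > e) :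
    Subsingleton (CechHomology 𝒜 x ℳ w Q P μ) := by
  refine RelHomology.subsingleton_iff.2 fun z hz => ?_
  obtain ⟨k, hk⟩ := exists_pow_smul_mem_relBoundaries hx j hz
  induction k generalizing μ z with
  | zero => simpa using hk
  | succ k ih =>
    have hμ' : w j + μ > e := by omega
    have hdeg : ((k + 1 : ℕ) : ℤ) * w j + μ = k * w j + (w j + μ) := by
      push_cast
      ring
    have := hK μ hμ
    have := hQ' (w j + μ) hμ'
    rw [hdeg, pow_succ, mul_smul] at hk
    refine mem_relBoundaries_of_smul_mem hx hPQ hP hQ hz (ih hμ' _ (mem_relCycles.2 ⟨?_, ?_⟩) hk)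
    · exact smul_mem_gradedCochains hx (hx j) (fun _ => Q.smul_mem (x j)) hz.1
    · rw [gradedCechD_apply, map_smul]
      exact smul_mem_gradedCochains hx (hx j) (fun _ => P.smul_mem (x j)) hz.2

end CechHomology

namespace HasFiniteCechHomology

variable (hx : ∀ i, x i ∈ 𝒜 (w i)) [Decomposition ℳ]
include hx

theorem of_ker_of_coker (hw : 0 < w j) (hPQ : P ≤ Q) (hP : P.IsHomogeneous ℳ)
    (hQ : Q.IsHomogeneous ℳ)
    (hK : HasFiniteCechHomology 𝒜 x ℳ w (Q ⊓ P.comap (LinearMap.lsmul A M (x j))) P)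
    (hQ' : HasFiniteCechHomology 𝒜 x ℳ w Q (P ⊔ x j • Q)) :
    HasFiniteCechHomology 𝒜 x ℳ w Q P := by
  obtain ⟨e, he⟩ := hK.exists_forall_gt_subsingleton
  obtain ⟨e', he'⟩ := hQ'.exists_forall_gt_subsingleton
  have hvanish : ∀ μ > max e e', Subsingleton (CechHomology 𝒜 x ℳ w Q P μ) := fun μ =>
    CechHomology.subsingleton_of_forall_gt hx hw hPQ hP hQ
      (fun μ hμ => he μ (le_max_left e e' |>.trans_lt hμ))
      (fun μ hμ => he' μ (le_max_right e e' |>.trans_lt hμ))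
  refine ⟨⟨_, hvanish⟩,
    forall_of_forall_gt_of_add (e := max e e') hw (fun μ hμ => ?_) fun μ hμ => ?_⟩
  · have := hvanish μ hμ
    infer_instance
  · have := hQ'.isNoetherian (w j + μ)
    have := hK.isNoetherian μ
    have : IsNoetherian (GradeZero.subring 𝒜)
        (CechHomology 𝒜 x ℳ w (P ⊔ x j • Q) P (w j + μ)) :=
      isNoetherian_of_ker_le_range _ _
        (CechHomology.ker_inclusion_le le_sup_left (sup_smul_le hPQ (x j)) (w j + μ))
    exact isNoetherian_of_ker_le_range _ _ (CechHomology.ker_mulVar_le hx hP hQ μ j)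

theorem of_smul_mem [IsNoetherian A M] (hA : irrelevantIdeal A 𝒜 ≤ Ideal.span (Set.range x))
    (hPQ : P ≤ Q) (hQ : Q.IsHomogeneous ℳ) (hxQ : ∀ i, ∀ q ∈ Q, x i • q ∈ P) :
    HasFiniteCechHomology 𝒜 x ℳ w Q P := by
  constructor
  · obtain ⟨e, he⟩ := exists_forall_gt_mem_of_pos_smul_mem (P := P) (𝒜 := 𝒜)
      (IsNoetherian.noetherian Q) hQ (pos_smul_mem_of_smul_mem hA hxQ)
    refine ⟨e, fun μ hμ => RelHomology.subsingleton_iff.2 fun z hz => ?_⟩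
    refine Submodule.mem_sup_left (mem_gradedCochains.2 fun T => ?_)
    obtain rfl | hT := T.eq_empty_or_nonempty
    · obtain ⟨m, hmQ, hm, hmz⟩ := (mem_gradedFrac_empty hx).1 (mem_gradedCochains.1 hz.1 ∅)
      exact (mem_gradedFrac_empty hx).2 ⟨m, he μ hμ m hmQ hm, hm, hmz⟩
    · exact gradedFrac_le_of_smul_mem hx hT hxQ μ (mem_gradedCochains.1 hz.1 T)
  · intro μ
    refine RelHomology.isNoetherian_of_le_sup (gradedCochains_mono hPQ μ)
      (gradedCochains_le_comap_gradedCechD hx P μ) (N := (gradedPiece 𝒜 ℳ μ).map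
        ((LinearMap.single A (cechL A x M) ∅ ∘ₗ cechFrac x ∅ 0).restrictScalars _)) ?_
    intro c hc
    obtain ⟨m, -, hm, hmc⟩ := (mem_gradedFrac_empty hx).1 (mem_gradedCochains.1 hc ∅)
    rw [← sub_add_cancel c (Pi.single ∅ (c ∅))]
    refine Submodule.add_mem_sup (mem_gradedCochains.2 fun T => ?_)
      ⟨m, hm, congrArg (Pi.single ∅) hmc⟩
    obtain rfl | hT := T.eq_empty_or_nonempty
    · simp
    · simpa [hT.ne_empty] using
        gradedFrac_le_of_smul_mem hx hT hxQ μ (mem_gradedCochains.1 hc T)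

theorem of_le [IsNoetherian A M] (hA : irrelevantIdeal A 𝒜 ≤ Ideal.span (Set.range x))
    (hw : ∀ i, 0 < w i) (hPQ : P ≤ Q) (hP : P.IsHomogeneous ℳ) (hQ : Q.IsHomogeneous ℳ) :
    HasFiniteCechHomology 𝒜 x ℳ w Q P := by
  suffices h : ∀ (J : Finset (Fin n)) {P Q : Submodule A M}, P ≤ Q → P.IsHomogeneous ℳ →
      Q.IsHomogeneous ℳ → (∀ i ∉ J, ∀ q ∈ Q, x i • q ∈ P) →
      HasFiniteCechHomology 𝒜 x ℳ w Q P from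
    h Finset.univ hPQ hP hQ fun i hi => absurd (Finset.mem_univ i) hi
  clear! P Q
  intro J
  induction J using Finset.induction_on with
  | empty =>
    exact fun hPQ _ hQ hxQ => of_smul_mem hx hA hPQ hQ fun i => hxQ i (Finset.notMem_empty i)
  | insert j J _ ih =>
    intro P Q hPQ hP hQ hxQ
    have hxQ' {i : Fin n} (hi : i ∉ J) (hij : i ≠ j) : ∀ q ∈ Q, x i • q ∈ P :=
      hxQ i (by simp [hi, hij])
    refine of_ker_of_coker hx (hw j) hPQ hP hQ ?_ ?_
    · refine ih (le_inf hPQ fun p hp => P.smul_mem (x j) hp) hP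
        (isHomogeneous_inf_comap_lsmul hP hQ (hx j)) fun i hi q hq => ?_
      obtain rfl | hij := eq_or_ne i j
      · exact hq.2
      · exact hxQ' hi hij q hq.1
    · refine ih (sup_smul_le hPQ (x j)) (isHomogeneous_sup_smul hP hQ (hx j)) hQ fun i hi q hq => ?_
      obtain rfl | hij := eq_or_ne i j
      · exact Submodule.mem_sup_right (Submodule.smul_mem_pointwise_smul q _ Q hq)
      · exact Submodule.mem_sup_left (hxQ' hi hij q hq)

end HasFiniteCechHomology

end CechHomology

section CechComplex

open SetLike

variable {A : Type} [CommRing A] {n : ℕ} {x : Fin n → A} {M : Type} [AddCommGroup M] [Module A M]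

/-- The component of a total Čech cochain in cohomological degree `p`. -/
noncomputable def cechTotalProj (p : ℕ) : CechTotal x M →ₗ[A] cechC A x M p :=
  LinearMap.pi fun S => LinearMap.proj S.1

/-- A cochain in cohomological degree `p`, extended by zero to all other degrees. -/
def cechTotalIncl (p : ℕ) (c : cechC A x M p) : CechTotal x M :=
  fun T => if h : T.card = p then c ⟨T, h⟩ else 0

theorem cechTotalProj_cechTotalIncl {p : ℕ} (c : cechC A x M p) :
    cechTotalProj p (cechTotalIncl p c) = c :=
  funext fun S => dif_pos S.2

theorem cechD_cechTotalProj (p : ℕ) (c : CechTotal x M) :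
    cechD A x M p (cechTotalProj p c) = cechTotalProj (p + 1) (cechTotalD x M c) := by
  funext T
  change cechD A x M p (cechTotalProj p c) T = cechTotalD x M c T.1
  rw [cechTotalD_apply, ← Finset.sum_attach]
  simp only [cechD, LinearMap.pi_apply, LinearMap.sum_apply]
  rfl

theorem cechTotalD_cechTotalIncl {p : ℕ} (c : cechC A x M p) :
    cechTotalD x M (cechTotalIncl p c) = cechTotalIncl (p + 1) (cechD A x M p c) := by
  funext T
  by_cases hT : T.card = p + 1
  · rw [cechTotalIncl, dif_pos hT, ← cechTotalProj_cechTotalIncl c, cechD_cechTotalProj,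
      cechTotalProj_cechTotalIncl]
    rfl
  · rw [cechTotalD_apply, cechTotalIncl, dif_neg hT]
    refine Finset.sum_eq_zero fun j hj => ?_
    have hcard : (T.erase j).card ≠ p := fun h => hT (h ▸ (Finset.card_erase_add_one hj).symm)
    rw [cechTotalIncl, dif_neg hcard, map_zero, smul_zero]

theorem cechIsBoundary_cechTotalProj_cechTotalD (p : ℕ) (b : CechTotal x M) :
    cechIsBoundary A x M p (cechTotalProj p (cechTotalD x M b)) := by
  cases p with
  | zero =>
    refine funext fun S => ?_
    change cechTotalD x M b S.1 = 0
    rw [cechTotalD_apply, Finset.card_eq_zero.1 S.2, Finset.sum_empty]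
  | succ p => exact ⟨_, cechD_cechTotalProj p b⟩

variable {𝒜 : ℤ → AddSubgroup A} [GradedRing 𝒜] {ℳ : ℤ → AddSubgroup M} [GradedSMul 𝒜 ℳ]
  {w : Fin n → ℤ} {μ : ℤ}

theorem eq_zero_of_mem_gradedCochains_bot {c : CechTotal x M}
    (hc : c ∈ gradedCochains 𝒜 x ℳ w ⊥ μ) : c = 0 := by
  refine funext fun T => ?_
  simpa [gradedFrac] using mem_gradedCochains.1 hc T

theorem cechIsBoundary_cechTotalProj (p : ℕ) {Q : Submodule A M} {z : CechTotal x M}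
    (hz : z ∈ relBoundaries (gradedCechD 𝒜 x M) (gradedCochains 𝒜 x ℳ w Q μ)
      (gradedCochains 𝒜 x ℳ w ⊥ μ)) : cechIsBoundary A x M p (cechTotalProj p z) := by
  obtain ⟨c, hc, b, -, rfl⟩ := mem_relBoundaries.1 hz
  rw [eq_zero_of_mem_gradedCochains_bot hc, zero_add]
  exact cechIsBoundary_cechTotalProj_cechTotalD p b

variable (hx : ∀ i, x i ∈ 𝒜 (w i))
include hx

theorem mem_cechGrade_iff_mem_gradedFrac_top {T : Finset (Fin n)} {c : cechL A x M T} :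
    c ∈ cechGrade A x M ℳ w μ T ↔ c ∈ gradedFrac 𝒜 x ℳ w ⊤ μ T := by
  constructor
  · intro hc
    suffices h : cechGrade A x M ℳ w μ T ≤ (gradedFrac 𝒜 x ℳ w ⊤ μ T).toAddSubgroup from h hc
    refine (AddSubgroup.closure_le _).2 ?_
    rintro _ ⟨m, k, hm, rfl⟩
    exact (mem_gradedFrac hx).2 ⟨k, m, trivial, hm, rfl⟩
  · intro hc
    obtain ⟨k, m, -, hm, rfl⟩ := (mem_gradedFrac hx).1 hc
    exact AddSubgroup.subset_closure ⟨m, k, hm, rfl⟩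

theorem cechTotalIncl_mem_relCycles {p : ℕ} {c : cechC A x M p}
    (hc : ∀ T, c T ∈ cechGrade A x M ℳ w μ T.1) (hd : cechD A x M p c = 0) :
    cechTotalIncl p c ∈ relCycles (gradedCechD 𝒜 x M) (gradedCochains 𝒜 x ℳ w ⊤ μ)
      (gradedCochains 𝒜 x ℳ w ⊥ μ) := by
  refine mem_relCycles.2 ⟨mem_gradedCochains.2 fun T => ?_, ?_⟩
  · rw [cechTotalIncl]
    split_ifs with hT
    · exact (mem_cechGrade_iff_mem_gradedFrac_top hx).1 (hc ⟨T, hT⟩)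
    · exact zero_mem _
  · have h0 : cechTotalIncl (p + 1) (0 : cechC A x M (p + 1)) = 0 :=
      funext fun _ => dite_eq_right_iff.2 fun _ => rfl
    rw [gradedCechD_apply, cechTotalD_cechTotalIncl, hd, h0]
    exact zero_mem _

theorem cechTotalProj_mem_cechGrade_and_cechD_eq_zero (p : ℕ) {z : CechTotal x M}
    (hz : z ∈ relCycles (gradedCechD 𝒜 x M) (gradedCochains 𝒜 x ℳ w ⊤ μ)
      (gradedCochains 𝒜 x ℳ w ⊥ μ)) :
    (∀ T, cechTotalProj p z T ∈ cechGrade A x M ℳ w μ T.1) ∧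
      cechD A x M p (cechTotalProj p z) = 0 := by
  refine ⟨fun T => (mem_cechGrade_iff_mem_gradedFrac_top hx).2 (mem_gradedCochains.1 hz.1 T.1), ?_⟩
  rw [cechD_cechTotalProj, ← gradedCechD_apply (𝒜 := 𝒜), eq_zero_of_mem_gradedCochains_bot hz.2,
    map_zero]

end CechComplex

theorem zgraded_localCohomology_end_finite_and_pieces_fg_general
    (A : Type) [CommRing A] (𝒜 : ℤ → AddSubgroup A) [GradedRing 𝒜]
    {n : ℕ} (x : Fin n → A) (w : Fin n → ℤ)
    (hw : ∀ i, 0 < w i) (hx : ∀ i, x i ∈ 𝒜 (w i))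
    (hxgen : irrelevantIdeal A 𝒜 ≤ Ideal.span (Set.range x))
    (M : Type) [AddCommGroup M] [Module A M] [IsNoetherian A M]
    (ℳ : ℤ → AddSubgroup M) [DirectSum.Decomposition ℳ] [SetLike.GradedSMul 𝒜 ℳ] :
    (∀ i : ℕ, ∃ e : ℤ, ∀ μ : ℤ, e < μ → ¬ lcGradeNonzero A x M ℳ w i μ) ∧
    (∀ (i : ℕ) (μ : ℤ), ∃ (r : ℕ) (c : Fin r → cechC A x M i),
      (∀ j, (∀ T, c j T ∈ cechGrade A x M ℳ w μ T.1) ∧ cechD A x M i (c j) = 0) ∧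
      ∀ z : cechC A x M i, (∀ T, z T ∈ cechGrade A x M ℳ w μ T.1) →
        cechD A x M i z = 0 →
        ∃ a : Fin r → A, (∀ j, a j ∈ 𝒜 0) ∧
          cechIsBoundary A x M i (z - ∑ j, a j • c j)) := by
  have hfin : HasFiniteCechHomology 𝒜 x ℳ w (⊤ : Submodule A M) ⊥ :=
    .of_le hx hxgen hw bot_le (fun μ m hm => by simp_all) (fun _ _ _ => trivial)
  refine ⟨fun i => ?_, fun i μ => ?_⟩
  · obtain ⟨e, he⟩ := hfin.exists_forall_gt_subsingleton
    refine ⟨e, fun μ hμ ⟨z, hz, hdz, hne⟩ => hne ?_⟩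
    have h := RelHomology.subsingleton_iff.1 (he μ hμ) (cechTotalIncl_mem_relCycles hx hz hdz)
    simpa only [cechTotalProj_cechTotalIncl] using cechIsBoundary_cechTotalProj i h
  · have := hfin.isNoetherian μ
    obtain ⟨r, y, hy, hspan⟩ := RelHomology.exists_fin_sub_sum_smul_mem_relBoundaries
      (d := gradedCechD 𝒜 x M) (Q := gradedCochains 𝒜 x ℳ w ⊤ μ) (P := gradedCochains 𝒜 x ℳ w ⊥ μ)
    refine ⟨r, fun j => cechTotalProj i (y j),
      fun j => cechTotalProj_mem_cechGrade_and_cechD_eq_zero hx i (hy j), fun z hz hdz => ?_⟩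
    obtain ⟨a, ha⟩ := hspan _ (cechTotalIncl_mem_relCycles hx hz hdz)
    refine ⟨fun j => a j, fun j => (a j).2, ?_⟩
    have hproj (j) : cechTotalProj i (a j • y j) = (a j : A) • cechTotalProj i (y j) := by
      rw [← algebraMap_smul A (a j) (y j)]
      exact map_smul (cechTotalProj i) _ _
    simpa only [map_sub, map_sum, cechTotalProj_cechTotalIncl, hproj] using
      cechIsBoundary_cechTotalProj i ha

open Filter in
/-- Let `S` be a Noetherian `ℤ`-graded ring (graded by `𝒜`; since `S` is Noetherian,
its irrelevant ideal `S₊`, generated by the homogeneous elements of positive degree,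
is generated by finitely many homogeneous elements `x i` of positive degrees `w i`),
and let `M` be a finitely generated graded `S`-module.  Then for every `i`:
(i) `end (H^i_{S₊}(M)) ∈ ℤ ∪ {-∞}`, i.e. `H^i_{S₊}(M)` vanishes in all sufficiently
large degrees, and
(ii) for every `μ ∈ ℤ` the graded piece `H^i_{S₊}(M)_μ` is a finitely generated
`S₀`-module: there are finitely many homogeneous degree-`μ` cocycles `c j` such that
every homogeneous degree-`μ` cocycle agrees, modulo coboundaries, with an
`S₀`-linear combination of the `c j`.
(Local cohomology is expressed through the graded Čech complex on `x`.) -/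
theorem zgraded_localCohomology_end_finite_and_pieces_fg
    (A : Type) [CommRing A] [IsNoetherianRing A]
    (𝒜 : ℤ → AddSubgroup A) [GradedRing 𝒜]
    {n : ℕ} (x : Fin n → A) (w : Fin n → ℤ)
    (hw : ∀ i, 0 < w i) (hx : ∀ i, x i ∈ 𝒜 (w i))
    (hxgen : Ideal.span (Set.range x) = Ideal.span {a : A | ∃ μ > 0, a ∈ 𝒜 μ})
    (M : Type) [AddCommGroup M] [Module A M] [Module.Finite A M]
    (ℳ : ℤ → AddSubgroup M) [DirectSum.Decomposition ℳ] [SetLike.GradedSMul 𝒜 ℳ] :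
    (∀ i : ℕ, ∃ e : ℤ, ∀ μ : ℤ, e < μ → ¬ lcGradeNonzero A x M ℳ w i μ) ∧
    (∀ (i : ℕ) (μ : ℤ), ∃ (r : ℕ) (c : Fin r → cechC A x M i),
      (∀ j, (∀ T, c j T ∈ cechGrade A x M ℳ w μ T.1) ∧ cechD A x M i (c j) = 0) ∧
      ∀ z : cechC A x M i, (∀ T, z T ∈ cechGrade A x M ℳ w μ T.1) →
        cechD A x M i z = 0 →
        ∃ a : Fin r → A, (∀ j, a j ∈ 𝒜 0) ∧
          cechIsBoundary A x M i (z - ∑ j, a j • c j)) :=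
  have : IsNoetherian A M := isNoetherian_of_isNoetherianRing_of_finite A M
  zgraded_localCohomology_end_finite_and_pieces_fg_general A 𝒜 x w hw hx hxgen.ge M ℳ
end

section
/- Let R → S be a homomorphism of Noetherian rings, M a finitely generated S-module and N a finitely generated R-module. Then for every q the S-module Tor_q^R(M, N) is finitely generated over S, and Supp_S( Tor_q^R(M, N) ) ⊆ Supp_S( M ⊗_R N ). -/
noncomputable section TorCore

variable (R : Type) [CommRing R] (S : Type) [CommRing S] [Algebra R S]
variable (M : Type) [AddCommGroup M] [Module R M] [Module S M] [IsScalarTower R S M]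
variable (F : ℕ → Type) [∀ q, AddCommGroup (F q)] [∀ q, Module R (F q)]
variable (dF : ∀ q : ℕ, F (q + 1) →ₗ[R] F q)

/-- The differential `M ⊗ F_{q+1} → M ⊗ F_q` of the complex `M ⊗_R F_•`, as a map of
`S`-modules (through the `S`-module structure of `M`). -/
def torD (q : ℕ) : TensorProduct R M (F (q + 1)) →ₗ[S] TensorProduct R M (F q) :=
  TensorProduct.AlgebraTensorModule.map (LinearMap.id : M →ₗ[S] M) (dF q)

/-- The outgoing differential `M ⊗ F_q → M ⊗ F_{q-1}` (the zero map for `q = 0`). -/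
def torDout : (q : ℕ) → (TensorProduct R M (F q) →ₗ[S] TensorProduct R M (F (q - 1)))
  | 0 => 0
  | (q + 1) => torD R S M F dF q

/-- `Tor_q^R(M, N)` computed from a given free resolution `F_• → N` of `N`, as an
`S`-module: the homology `ker(M ⊗ F_q → M ⊗ F_{q-1}) / im(M ⊗ F_{q+1} → M ⊗ F_q)`. -/
def torMod (q : ℕ) : Type :=
  ↥(LinearMap.ker (torDout R S M F dF q)) ⧸
    (Submodule.comap (LinearMap.ker (torDout R S M F dF q)).subtype
      (LinearMap.range (torD R S M F dF q)))

instance (q : ℕ) : AddCommGroup (torMod R S M F dF q) := by unfold torMod; infer_instance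
instance (q : ℕ) : Module S (torMod R S M F dF q) := by unfold torMod; infer_instance

end TorCore

/-!
If `t ∈ R` annihilates `N`, multiplication by `t` on a projective resolution `F_• → N` lifts the
zero map of `N`, so it is null-homotopic; the homotopy survives `M ⊗_R -`, hence `t` annihilates
`Tor_q^R(M, N)`. So does every element of `S` annihilating `M`, because Tor is a subquotient of
`M ⊗_R F_q`. A prime in the support of Tor therefore contains the annihilator of `M` and lies over
a prime containing the annihilator of `N`. As `M` and `N` are finite, these two conditions describe
`Supp_S (M ⊗_R N)`: tensoring over the residue field shows that the support of a tensor product is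
the intersection of the supports, and that support commutes with base change.
-/

open TensorProduct

section Homotopy

variable {R : Type*} [Ring R]

theorem exists_comp_eq_of_exact {P A B C : Type*} [AddCommGroup P] [Module R P]
    [Module.Projective R P] [AddCommGroup A] [Module R A] [AddCommGroup B] [Module R B]
    [AddCommGroup C] [Module R C] {f : A →ₗ[R] B} {g : B →ₗ[R] C} (hfg : Function.Exact f g)
    {u : P →ₗ[R] B} (hu : g ∘ₗ u = 0) : ∃ v : P →ₗ[R] A, f ∘ₗ v = u := by
  have hmem (x : P) : u x ∈ LinearMap.range f := (hfg _).1 (LinearMap.congr_fun hu x)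
  obtain ⟨v, hv⟩ := Module.projective_lifting_property f.rangeRestrict
    (u.codRestrict (LinearMap.range f) hmem) f.surjective_rangeRestrict
  exact ⟨v, LinearMap.ext fun x => congrArg Subtype.val (LinearMap.congr_fun hv x)⟩

theorem exists_nullHomotopy {N : Type*} [AddCommGroup N] [Module R N] {F G : ℕ → Type*}
    [∀ q, AddCommGroup (F q)] [∀ q, Module R (F q)] [∀ q, Module.Projective R (F q)]
    [∀ q, AddCommGroup (G q)] [∀ q, Module R (G q)]
    {dF : ∀ q, F (q + 1) →ₗ[R] F q} (hdF : ∀ q, dF q ∘ₗ dF (q + 1) = 0)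
    {dG : ∀ q, G (q + 1) →ₗ[R] G q} {ε : G 0 →ₗ[R] N}
    (hG : ∀ q, Function.Exact (dG (q + 1)) (dG q)) (hG₀ : Function.Exact (dG 0) ε)
    {φ : ∀ q, F q →ₗ[R] G q} (hφ : ∀ q, dG q ∘ₗ φ (q + 1) = φ q ∘ₗ dF q)
    (hεφ : ε ∘ₗ φ 0 = 0) :
    ∃ h : ∀ q, F q →ₗ[R] G (q + 1), dG 0 ∘ₗ h 0 = φ 0 ∧
      ∀ q, dG (q + 1) ∘ₗ h (q + 1) + h q ∘ₗ dF q = φ (q + 1) := by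
  obtain ⟨h₀, hh₀⟩ := exists_comp_eq_of_exact hG₀ hεφ
  -- The condition on `h` says exactly that `dG q` kills `φ (q + 1) - h ∘ dF q`.
  have extend (q : ℕ) (h : {h : F q →ₗ[R] G (q + 1) // dG q ∘ₗ h ∘ₗ dF q = φ q ∘ₗ dF q}) :
      ∃ h' : F (q + 1) →ₗ[R] G (q + 2), dG (q + 1) ∘ₗ h' = φ (q + 1) - h.1 ∘ₗ dF q :=
    exists_comp_eq_of_exact (hG q) <| by rw [LinearMap.comp_sub, hφ, h.2, sub_self]
  choose next hnext using extend
  let h (q : ℕ) : {h : F q →ₗ[R] G (q + 1) // dG q ∘ₗ h ∘ₗ dF q = φ q ∘ₗ dF q} :=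
    Nat.rec ⟨h₀, by rw [← LinearMap.comp_assoc, hh₀]⟩
      (fun q h => ⟨next q h, by
        rw [← LinearMap.comp_assoc, hnext, LinearMap.sub_comp, LinearMap.comp_assoc, hdF,
          LinearMap.comp_zero, sub_zero]⟩) q
  exact ⟨fun q => (h q).1, hh₀, fun q => eq_sub_iff_add_eq.1 (hnext q (h q))⟩

end Homotopy

section TensorProduct

theorem nontrivial_tensorProduct_iff {K V W : Type*} [Field K] [AddCommGroup V] [Module K V]
    [AddCommGroup W] [Module K W] : Nontrivial (V ⊗[K] W) ↔ Nontrivial V ∧ Nontrivial W := by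
  rcases subsingleton_or_nontrivial V with hV | hV
  · have : Subsingleton (V ⊗[K] W) := inferInstance
    simp only [← not_subsingleton_iff_nontrivial, this, hV, not_true_eq_false, false_and]
  · simp [hV]

variable {R S M N : Type*} [CommRing R] [CommRing S] [Algebra R S]
  [AddCommGroup M] [Module S M] [AddCommGroup N]

theorem support_tensorProduct [Module.Finite S M] [Module S N] [Module.Finite S N] :
    Module.support S (M ⊗[S] N) = Module.support S M ∩ Module.support S N := by
  ext p
  simp only [Set.mem_inter_iff, Module.mem_support_iff_nontrivial_residueField_tensorProduct]
  rw [(AlgebraTensorModule.distribBaseChange S p.asIdeal.ResidueField M N).nontrivial_congr,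
    nontrivial_tensorProduct_iff]

theorem support_baseChange [Module R N] [Module.Finite R N] :
    Module.support S (S ⊗[R] N) =
      PrimeSpectrum.comap (algebraMap R S) ⁻¹' Module.support R N := by
  ext p
  let r := PrimeSpectrum.comap (algebraMap R S) p
  let κr := r.asIdeal.ResidueField
  let κp := p.asIdeal.ResidueField
  let f : κr →ₐ[R] κp := Ideal.ResidueField.mapₐ r.asIdeal p.asIdeal (Algebra.ofId R S) rfl
  let _ : Algebra κr κp := f.toAlgebra
  have : IsScalarTower R κr κp := IsScalarTower.of_algHom f
  rw [Set.mem_preimage, Module.mem_support_iff_nontrivial_residueField_tensorProduct,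
    Module.mem_support_iff_nontrivial_residueField_tensorProduct,
    (AlgebraTensorModule.cancelBaseChange R S κp κp N).nontrivial_congr,
    ← (AlgebraTensorModule.cancelBaseChange R κr κp κp N).nontrivial_congr]
  exact Module.FaithfullyFlat.nontrivial_tensorProduct_iff_right κr κp

variable [Module R M] [IsScalarTower R S M] [Module R N]

theorem support_tensorProduct_of_isScalarTower [Module.Finite S M] [Module.Finite R N] :
    Module.support S (M ⊗[R] N) =
      Module.support S M ∩ PrimeSpectrum.comap (algebraMap R S) ⁻¹' Module.support R N := by
  rw [← (AlgebraTensorModule.cancelBaseChange R S S M N).support_eq, support_tensorProduct,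
    support_baseChange]

theorem isNoetherian_tensorProduct [IsNoetherian S M] [Module.Finite R N] :
    IsNoetherian S (M ⊗[R] N) := by
  obtain ⟨n, f, hf⟩ := Module.Finite.exists_fin' R N
  have : IsNoetherian S (M ⊗[R] (Fin n → R)) :=
    isNoetherian_of_linearEquiv (TensorProduct.piScalarRight R S M (Fin n)).symm
  exact isNoetherian_of_surjective (AlgebraTensorModule.lTensor S M f)
    (LinearMap.range_eq_top.2 (LinearMap.lTensor_surjective M hf))

variable (R S M N) in
theorem annihilator_le_annihilator_tensorProduct :
    Module.annihilator S M ≤ Module.annihilator S (M ⊗[R] N) := by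
  intro s hs
  rw [Module.mem_annihilator] at hs
  rw [Module.mem_annihilator_iff_lsmul_eq_zero]
  ext m n
  simp [smul_tmul', hs]

end TensorProduct

namespace torMod

variable {R : Type} [CommRing R] {S : Type} [CommRing S] [Algebra R S]
  {M : Type} [AddCommGroup M] [Module R M] [Module S M] [IsScalarTower R S M]
  {N : Type} [AddCommGroup N] [Module R N]
  {F : ℕ → Type} [∀ q, AddCommGroup (F q)] [∀ q, Module R (F q)]
  {dF : ∀ q : ℕ, F (q + 1) →ₗ[R] F q}

variable (R S M F dF) in
/-- The projection from the `q`-cycles of `M ⊗_R F_•` onto their homology classes. -/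
def mk (q : ℕ) : LinearMap.ker (torDout R S M F dF q) →ₗ[S] torMod R S M F dF q :=
  Submodule.mkQ _

theorem torD_eq_lTensor (q : ℕ) :
    torD R S M F dF q = AlgebraTensorModule.lTensor S M (dF q) :=
  rfl

theorem mk_surjective (q : ℕ) : Function.Surjective (mk R S M F dF q) :=
  Submodule.mkQ_surjective _

theorem mk_eq_zero_iff {q : ℕ} {z : LinearMap.ker (torDout R S M F dF q)} :
    mk R S M F dF q z = 0 ↔ (z : M ⊗[R] F q) ∈ LinearMap.range (torD R S M F dF q) :=
  Submodule.Quotient.mk_eq_zero _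

theorem finite [IsNoetherian S M] (q : ℕ) [Module.Finite R (F q)] :
    Module.Finite S (torMod R S M F dF q) :=
  have : IsNoetherian S (M ⊗[R] F q) := isNoetherian_tensorProduct
  Module.Finite.of_surjective (mk R S M F dF q) (mk_surjective q)

theorem annihilator_le_annihilator_left (q : ℕ) :
    Module.annihilator S M ≤ Module.annihilator S (torMod R S M F dF q) :=
  calc Module.annihilator S M
    _ ≤ Module.annihilator S (M ⊗[R] F q) := annihilator_le_annihilator_tensorProduct R S M (F q)
    _ ≤ Module.annihilator S (LinearMap.ker (torDout R S M F dF q)) :=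
      LinearMap.annihilator_le_of_injective _ (Submodule.subtype_injective _)
    _ ≤ Module.annihilator S (torMod R S M F dF q) :=
      LinearMap.annihilator_le_of_surjective _ (mk_surjective q)

theorem smul_eq_zero_of_nullHomotopy {t : R} {h : ∀ q, F q →ₗ[R] F (q + 1)}
    (h₀ : dF 0 ∘ₗ h 0 = t • LinearMap.id)
    (hsucc : ∀ q, dF (q + 1) ∘ₗ h (q + 1) + h q ∘ₗ dF q = t • LinearMap.id)
    (q : ℕ) (x : torMod R S M F dF q) : algebraMap R S t • x = 0 := by
  obtain ⟨z, rfl⟩ := mk_surjective q x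
  rw [← map_smul, mk_eq_zero_iff]
  refine ⟨AlgebraTensorModule.lTensor S M (h q) z, ?_⟩
  obtain ⟨z, hz⟩ := z
  cases q with
  | zero =>
    have := LinearMap.congr_fun (congrArg (AlgebraTensorModule.lTensor S M) h₀) z
    simpa [torD_eq_lTensor, AlgebraTensorModule.lTensor_comp] using this
  | succ q =>
    have hz : LinearMap.lTensor M (dF q) z = 0 := hz
    have := LinearMap.congr_fun (congrArg (AlgebraTensorModule.lTensor S M) (hsucc q)) z
    simpa [torD_eq_lTensor, AlgebraTensorModule.lTensor_comp, hz] using this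

theorem annihilator_le_comap_annihilator_right [∀ q, Module.Projective R (F q)] {ε : F 0 →ₗ[R] N}
    (hexact : ∀ q : ℕ, Function.Exact (dF (q + 1)) (dF q))
    (hexact0 : Function.Exact (dF 0) ε) (q : ℕ) :
    Module.annihilator R N ≤
      (Module.annihilator S (torMod R S M F dF q)).comap (algebraMap R S) := by
  intro t ht
  rw [Module.mem_annihilator] at ht
  obtain ⟨h, h₀, hsucc⟩ := exists_nullHomotopy (fun q => (hexact q).linearMap_comp_eq_zero)
    hexact hexact0 (φ := fun _ => t • LinearMap.id) (fun q => by ext; simp) (by ext; simp [ht])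
  exact Module.mem_annihilator.2 (smul_eq_zero_of_nullHomotopy h₀ hsucc q)

theorem support_subset_support_tensorProduct [Module.Finite S M] [Module.Finite R N]
    [∀ q, Module.Projective R (F q)] {ε : F 0 →ₗ[R] N}
    (hexact : ∀ q : ℕ, Function.Exact (dF (q + 1)) (dF q))
    (hexact0 : Function.Exact (dF 0) ε) (q : ℕ) :
    Module.support S (torMod R S M F dF q) ⊆ Module.support S (M ⊗[R] N) := by
  intro p hp
  have hpT : Module.annihilator S (torMod R S M F dF q) ≤ p.asIdeal :=
    Module.annihilator_le_of_mem_support hp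
  rw [support_tensorProduct_of_isScalarTower, Set.mem_inter_iff, Set.mem_preimage,
    Module.mem_support_iff_of_finite, Module.mem_support_iff_of_finite]
  exact ⟨(annihilator_le_annihilator_left q).trans hpT,
    (annihilator_le_comap_annihilator_right hexact hexact0 q).trans (Ideal.comap_mono hpT)⟩

end torMod

theorem torMod_finite_and_support_subset_general
    (R : Type) [CommRing R] (S : Type) [CommRing S] [Algebra R S]
    (M : Type) [AddCommGroup M] [Module R M] [Module S M] [IsScalarTower R S M]
    [IsNoetherian S M]
    (N : Type) [AddCommGroup N] [Module R N]
    (F : ℕ → Type) [∀ q, AddCommGroup (F q)] [∀ q, Module R (F q)]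
    [∀ q, Module.Projective R (F q)] [∀ q, Module.Finite R (F q)]
    (dF : ∀ q : ℕ, F (q + 1) →ₗ[R] F q) (ε : F 0 →ₗ[R] N)
    (hexact : ∀ q : ℕ, Function.Exact (dF (q + 1)) (dF q))
    (hexact0 : Function.Exact (dF 0) ε) (hsurj : Function.Surjective ε) (q : ℕ) :
    Module.Finite S (torMod R S M F dF q) ∧
      Module.support S (torMod R S M F dF q) ⊆ Module.support S (M ⊗[R] N) :=
  have : Module.Finite R N := Module.Finite.of_surjective ε hsurj
  ⟨torMod.finite q, torMod.support_subset_support_tensorProduct hexact hexact0 q⟩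

/-- **Support of Tor.**  Let `R → S` be a homomorphism of Noetherian rings, `M` a finitely
generated `S`-module and `N` a finitely generated `R`-module.  `Tor_q^R(M, N)` is computed
from any resolution of `N` by finite free `R`-modules `F_•` (which exists since `R` is
Noetherian and `N` finitely generated), carrying its natural `S`-module structure through
`M`.  Then `Tor_q^R(M, N)` is a finitely generated `S`-module, and
`Supp_S (Tor_q^R(M, N)) ⊆ Supp_S (M ⊗_R N)` for every `q`. -/
theorem torMod_finite_and_support_subset
    (R : Type) [CommRing R] [IsNoetherianRing R]
    (S : Type) [CommRing S] [IsNoetherianRing S] [Algebra R S]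
    (M : Type) [AddCommGroup M] [Module R M] [Module S M] [IsScalarTower R S M]
    [Module.Finite S M]
    (N : Type) [AddCommGroup N] [Module R N] [Module.Finite R N]
    (F : ℕ → Type) [∀ q, AddCommGroup (F q)] [∀ q, Module R (F q)]
    [∀ q, Module.Free R (F q)] [∀ q, Module.Finite R (F q)]
    (dF : ∀ q : ℕ, F (q + 1) →ₗ[R] F q) (ε : F 0 →ₗ[R] N)
    (hexact : ∀ q : ℕ, Function.Exact (dF (q + 1)) (dF q))
    (hexact0 : Function.Exact (dF 0) ε) (hsurj : Function.Surjective ε) :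
    ∀ q : ℕ, Module.Finite S (torMod R S M F dF q) ∧
      Module.support S (torMod R S M F dF q) ⊆
        Module.support S (TensorProduct R M N) := by
  exact torMod_finite_and_support_subset_general R S M N F dF ε hexact hexact0 hsurj
end
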